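/- arXiv:1804.08011 — 6 statements merged into one kernel-verified Lean document; each statement's English description precedes it below -/
import Mathlib

section
/- Let F be a field, let a, b ≥ 2 be integers, and let t₁, t₂ ∈ F be distinct nonzero elements. Set e₁ = t₁ + t₂ and e₂ = t₁t₂. Then in the polynomial ring P = F[x₀,…,x_a, y₀,…,y_b] one has the ideal equality I_e = I₂(m₁) ∩ I₂(m₂), where I_e = I₂(MX) + I₂(MY) + J_e and, for ℓ = 1, 2, m_ℓ is the 2×(a+b) matrix with rows (x₀,…,x_{a−1}, y₀,…,y_{b−1}) and (x₁,…,x_a, t_ℓ y₁,…,t_ℓ y_b). -/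
open MvPolynomial

noncomputable section

/-- The polynomial ring `F[x₀,…,x_a, y₀,…,y_b]`. -/
abbrev KPoly (F : Type*) [CommRing F] (a b : ℕ) : Type _ :=
  MvPolynomial (Fin (a + 1) ⊕ Fin (b + 1)) F

variable (F : Type*) [CommRing F] (a b : ℕ)

/-- The variable `x_i`. -/
def xv (i : Fin (a + 1)) : KPoly F a b := X (Sum.inl i)

/-- The variable `y_j`. -/
def yv (j : Fin (b + 1)) : KPoly F a b := X (Sum.inr j)

/-- The ideal generated by the 2×2 minors of the matrix `MX` with rows
`(x₀,…,x_{a−1})` and `(x₁,…,x_a)`. -/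
def I2MX : Ideal (KPoly F a b) :=
  Ideal.span { f | ∃ c c' : Fin a,
    f = xv F a b c.castSucc * xv F a b c'.succ - xv F a b c'.castSucc * xv F a b c.succ }

/-- The ideal generated by the 2×2 minors of the matrix `MY` with rows
`(y₀,…,y_{b−1})` and `(y₁,…,y_b)`. -/
def I2MY : Ideal (KPoly F a b) :=
  Ideal.span { f | ∃ c c' : Fin b,
    f = yv F a b c.castSucc * yv F a b c'.succ - yv F a b c'.castSucc * yv F a b c.succ }

/-- The first row `(x₀,…,x_{a−1}, y₀,…,y_{b−1})` of the matrix `M_t`. -/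
def mrow1 : Fin a ⊕ Fin b → KPoly F a b
  | Sum.inl c => xv F a b c.castSucc
  | Sum.inr c => yv F a b c.castSucc

/-- The second row `(x₁,…,x_a, t·y₁,…,t·y_b)` of the matrix `M_t`. -/
def mrow2 (t : F) : Fin a ⊕ Fin b → KPoly F a b
  | Sum.inl c => xv F a b c.succ
  | Sum.inr c => C t * yv F a b c.succ

/-- The ideal generated by the 2×2 minors of the matrix `M_t`. -/
def I2M (t : F) : Ideal (KPoly F a b) :=
  Ideal.span { f | ∃ c c' : Fin a ⊕ Fin b,
    f = mrow1 F a b c * mrow2 F a b t c' - mrow1 F a b c' * mrow2 F a b t c }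

/-- The ideal `J_e` generated by the bilinear forms
`Q_{i,j} = x_{i+2}y_j − e₁x_{i+1}y_{j+1} + e₂x_iy_{j+2}`. -/
def Je (e1 e2 : F) : Ideal (KPoly F a b) :=
  Ideal.span { f | ∃ i j : ℕ, ∃ _ : i + 2 ≤ a, ∃ _ : j + 2 ≤ b,
    f = xv F a b ⟨i + 2, by omega⟩ * yv F a b ⟨j, by omega⟩
      - C e1 * (xv F a b ⟨i + 1, by omega⟩ * yv F a b ⟨j + 1, by omega⟩)
      + C e2 * (xv F a b ⟨i, by omega⟩ * yv F a b ⟨j + 2, by omega⟩) }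

/-!
Over `S = F[τ]/(τ² - e₁τ + e₂)`, let `φ_τ : P → S[u, w, v]` be given by `x_i ↦ u (τv)^i` and
`y_j ↦ w v^j`. The point is that `ker φ_τ ⊆ I_e` as soon as `e₂` is a unit. Indeed, modulo
`I₂(MX) + I₂(MY)` a monomial depends only on its degrees `p`, `q` in the `x`'s and `y`'s and on the
sums `k`, `l` of the indices of its `x`'s and `y`'s. The forms `Q_{i,j}` say that, for fixed `p`,
`q` and `k + l`, the resulting sequence in `k` satisfies the linear recurrence with characteristic
polynomial `τ² - e₁τ + e₂`; hence it is a linear function of `τ^k`, and reduction modulo `I_e`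
factors linearly through `φ_τ`.

For `e₁ = t₁ + t₂` and `e₂ = t₁t₂` the two specializations `τ ↦ t₁`, `τ ↦ t₂` are jointly injective
on `S`, so `ker φ_τ` is the intersection of the kernels of `φ_{t₁}` and `φ_{t₂}`. These contain
`I₂(m₁)` and `I₂(m₂)`, while `I_e` is contained in both of these ideals by a direct computation.
-/

open scoped QuadraticAlgebra

variable {F a b}

section HankelMinors

variable {M : Type*} [CommMonoid M] {n : ℕ} {x : ℕ → M}

/-- The 2×2 minors of the matrix with rows `(x₀,…,x_{n−1})` and `(x₁,…,x_n)` vanish. The values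
`x_i` with `i > n` are irrelevant. -/
def HankelMinorsVanish (n : ℕ) (x : ℕ → M) : Prop :=
  ∀ i j, i < n → j < n → x i * x (j + 1) = x j * x (i + 1)

theorem HankelMinorsVanish.mul_add_eq_add_mul (hx : HankelMinorsVanish n x) {i j d : ℕ}
    (hi : i + d ≤ n) (hj : j + d ≤ n) : x i * x (j + d) = x (i + d) * x j := by
  induction d generalizing i j with
  | zero => rfl
  | succ d ih =>
    calc x i * x (j + (d + 1)) = x i * x (j + d + 1) := rfl
      _ = x (i + 1) * x (j + d) := by rw [hx i (j + d) (by omega) (by omega), mul_comm]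
      _ = x (i + 1 + d) * x j := ih (by omega) (by omega)
      _ = x (i + (d + 1)) * x j := by rw [add_right_comm, add_assoc]

theorem HankelMinorsVanish.mul_eq_mul (hx : HankelMinorsVanish n x) {i j k l : ℕ} (hi : i ≤ n)
    (hj : j ≤ n) (hk : k ≤ n) (hl : l ≤ n) (h : i + j = k + l) : x i * x j = x k * x l := by
  rcases le_total i k with hik | hki
  · obtain ⟨d, rfl⟩ := Nat.exists_eq_add_of_le hik
    obtain rfl : j = l + d := by omega
    exact hx.mul_add_eq_add_mul hk hj
  · obtain ⟨d, rfl⟩ := Nat.exists_eq_add_of_le hki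
    obtain rfl : l = j + d := by omega
    exact (hx.mul_add_eq_add_mul hi hl).symm

/-- The standard monomial of degree `p` and weight `w` in `x₀,…,x_n`, where `x_i` has weight `i`:
each factor takes the largest index that the remaining weight allows. The weight of the result is
`w` only if `w ≤ p * n`. -/
def stdMonomial (n : ℕ) (x : ℕ → M) : ℕ → ℕ → M
  | 0, _ => 1
  | p + 1, w => x (min n w) * stdMonomial n x p (w - min n w)

theorem HankelMinorsVanish.mul_stdMonomial (hx : HankelMinorsVanish n x) {p i w : ℕ} (hi : i ≤ n)
    (hw : w ≤ p * n) : x i * stdMonomial n x p w = stdMonomial n x (p + 1) (i + w) := by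
  induction p generalizing i w with
  | zero =>
    obtain rfl : w = 0 := by omega
    simp [stdMonomial, hi]
  | succ p ih =>
    rw [Nat.succ_mul] at hw
    set m := min n w with hm
    set m' := min n (i + w)
    calc x i * stdMonomial n x (p + 1) w
        = x i * x m * stdMonomial n x p (w - m) := by rw [mul_assoc, hm]; rfl
      _ = x m' * x (i + m - m') * stdMonomial n x p (w - m) := by
        rw [hx.mul_eq_mul (j := m) (k := m') (l := i + m - m') hi] <;> omega
      _ = x m' * stdMonomial n x (p + 1) (i + m - m' + (w - m)) := by
        rw [mul_assoc, ih (by omega) (by omega)]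
      _ = x m' * stdMonomial n x (p + 1) (i + w - m') := by
        rw [show i + m - m' + (w - m) = i + w - m' by omega]
      _ = stdMonomial n x (p + 2) (i + w) := rfl

end HankelMinors

/-- The algebra `F[τ]/(τ² - e₁τ + e₂)`, in which `ω` is the class of `τ`. -/
abbrev RootAlgebra (e₁ e₂ : F) : Type _ := QuadraticAlgebra F (-e₂) e₁

section Recurrence

variable {M : Type*} [AddCommGroup M] [Module F M] {e₁ e₂ : F}

theorem omega_pow_add_two (e₁ e₂ : F) (k : ℕ) :
    (ω : RootAlgebra e₁ e₂) ^ (k + 2) = e₁ • ω ^ (k + 1) - e₂ • ω ^ k := by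
  rw [pow_add, sq, QuadraticAlgebra.omega_mul_omega_eq_add, mul_add, mul_smul_comm, mul_smul_comm,
    mul_one, ← pow_succ, neg_smul]
  abel

theorem isUnit_omega (he₂ : IsUnit e₂) : IsUnit (ω : RootAlgebra e₁ e₂) := by
  rw [QuadraticAlgebra.isUnit_iff_norm_isUnit]
  simpa [QuadraticAlgebra.norm_def] using he₂

theorem exists_linearMap_omega_pow_of_recurrence (he₂ : IsUnit e₂) {k₀ k₁ : ℕ} {g : ℕ → M}
    (hg : ∀ k, k₀ ≤ k → k + 2 ≤ k₁ → g (k + 2) - e₁ • g (k + 1) + e₂ • g k = 0) :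
    ∃ L : RootAlgebra e₁ e₂ →ₗ[F] M, ∀ k, k₀ ≤ k → k ≤ k₁ → g k = L (ω ^ k) := by
  let B : RootAlgebra e₁ e₂ →ₗ[F] M :=
    (QuadraticAlgebra.basis (-e₂) e₁).constr F ![g k₀, g (k₀ + 1)]
  have hB (d : ℕ) (hd : k₀ + d ≤ k₁) : g (k₀ + d) = B (ω ^ d) := by
    induction d using Nat.twoStepInduction with
    | zero => simp [B, Module.Basis.constr_apply_fintype]
    | one => simp [B, Module.Basis.constr_apply_fintype]
    | more d ih₀ ih₁ =>
      have h := hg (k₀ + d) (by omega) (by omega)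
      rw [omega_pow_add_two, map_sub, map_smul, map_smul, ← ih₀ (by omega), ← ih₁ (by omega),
        ← sub_eq_zero, ← h, ← add_assoc, ← add_assoc]
      abel
  obtain ⟨υ, hυ⟩ := isUnit_omega (e₁ := e₁) he₂
  refine ⟨B ∘ₗ LinearMap.mulLeft F ↑(υ⁻¹ ^ k₀), fun k hk hk₁ => ?_⟩
  obtain ⟨d, rfl⟩ := Nat.exists_eq_add_of_le hk
  rw [hB d hk₁, LinearMap.comp_apply, LinearMap.mulLeft_apply, ← hυ, ← Units.val_pow_eq_pow_val,
    ← Units.val_pow_eq_pow_val, ← Units.val_mul, pow_add, inv_pow, inv_mul_cancel_left]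

end Recurrence

section BilinearRelations

variable {A : Type*} [CommRing A] [Algebra F A] {e₁ e₂ : F} {x y : ℕ → A}

/-- The forms `Q_{i,j}` vanish on the sequences `x₀,…,x_a` and `y₀,…,y_b`. The values `x_i` with
`i > a` and `y_j` with `j > b` are irrelevant. -/
def BilinearFormsVanish (a b : ℕ) (e₁ e₂ : F) (x y : ℕ → A) : Prop :=
  ∀ i j, i + 2 ≤ a → j + 2 ≤ b →
    x (i + 2) * y j - e₁ • (x (i + 1) * y (j + 1)) + e₂ • (x i * y (j + 2)) = 0

theorem bilinearFormsVanish_stdMonomial (ha : 2 ≤ a) (hb : 2 ≤ b) (hx : HankelMinorsVanish a x)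
    (hy : HankelMinorsVanish b y) (hQ : BilinearFormsVanish a b e₁ e₂ x y) (p q : ℕ) :
    BilinearFormsVanish (p * a) (q * b) e₁ e₂ (stdMonomial a x p) (stdMonomial b y q) := by
  intro k l hk hl
  obtain _ | p := p
  · omega
  obtain _ | q := q
  · omega
  rw [Nat.succ_mul] at hk hl
  obtain ⟨i, k, rfl, hi, hk'⟩ : ∃ i k', k = i + k' ∧ i + 2 ≤ a ∧ k' ≤ p * a :=
    ⟨min (a - 2) k, k - min (a - 2) k, by omega, by omega, by omega⟩
  obtain ⟨j, l, rfl, hj, hl'⟩ : ∃ j l', l = j + l' ∧ j + 2 ≤ b ∧ l' ≤ q * b :=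
    ⟨min (b - 2) l, l - min (b - 2) l, by omega, by omega, by omega⟩
  have hG (d : ℕ) (hd : i + d ≤ a) :
      stdMonomial a x (p + 1) (i + k + d) = x (i + d) * stdMonomial a x p k := by
    rw [hx.mul_stdMonomial hd hk', add_right_comm]
  have hH (d : ℕ) (hd : j + d ≤ b) :
      stdMonomial b y (q + 1) (j + l + d) = y (j + d) * stdMonomial b y q l := by
    rw [hy.mul_stdMonomial hd hl', add_right_comm]
  rw [hG 2 hi, hG 1 (by omega), ← add_zero (i + k), hG 0 (by omega),
    hH 2 hj, hH 1 (by omega), ← add_zero (j + l), hH 0 (by omega)]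
  have hQij := hQ i j hi hj
  simp only [Algebra.smul_def] at hQij ⊢
  linear_combination (stdMonomial a x p k * stdMonomial b y q l) * hQij

theorem BilinearFormsVanish.exists_linearMap_omega_pow (he₂ : IsUnit e₂)
    (hQ : BilinearFormsVanish a b e₁ e₂ x y) (n : ℕ) :
    ∃ L : RootAlgebra e₁ e₂ →ₗ[F] A,
      ∀ k l, k + l = n → k ≤ a → l ≤ b → x k * y l = L (ω ^ k) := by
  obtain ⟨L, hL⟩ := exists_linearMap_omega_pow_of_recurrence (e₁ := e₁) he₂ (k₀ := n - b)
    (k₁ := min n a) (g := fun k => x k * y (n - k)) fun k hk hk' => by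
      have h := hQ k (n - (k + 2)) (by omega) (by omega)
      rwa [show n - (k + 2) + 2 = n - k by omega,
        show n - (k + 2) + 1 = n - (k + 1) by omega] at h
  refine ⟨L, fun k l hkl hk hl => ?_⟩
  rw [← hL k (by omega) (by omega), ← hkl, Nat.add_sub_cancel_left]

end BilinearRelations

section ScrollMap

variable {S : Type*} [CommRing S] [Algebra F S]

variable (F a b) in
/-- The parametrization `x_i ↦ u (τv)^i`, `y_j ↦ w v^j` of the scroll defined by the 2×2 minors of
`M_τ`; the variables `X 0`, `X 1`, `X 2` of the target stand for `u`, `w`, `v`. -/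
def scrollMap (τ : S) : KPoly F a b →ₐ[F] MvPolynomial (Fin 3) S :=
  aeval (Sum.elim (fun i => X 0 * (C τ * X 2) ^ (i : ℕ)) fun j => X 1 * X 2 ^ (j : ℕ))

@[simp]
theorem scrollMap_xv (τ : S) (i : Fin (a + 1)) :
    scrollMap F a b τ (xv F a b i) = X 0 * (C τ * X 2) ^ (i : ℕ) := by
  simp [scrollMap, xv]

@[simp]
theorem scrollMap_yv (τ : S) (j : Fin (b + 1)) :
    scrollMap F a b τ (yv F a b j) = X 1 * X 2 ^ (j : ℕ) := by
  simp [scrollMap, yv]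

theorem mapAlgHom_scrollMap {T : Type*} [CommRing T] [Algebra F T] (σ : S →ₐ[F] T) (τ : S)
    (f : KPoly F a b) : mapAlgHom σ (scrollMap F a b τ f) = scrollMap F a b (σ τ) f := by
  suffices (mapAlgHom σ).comp (scrollMap F a b τ) = scrollMap F a b (σ τ) from
    DFunLike.congr_fun this f
  ext (i | j) : 1 <;> simp [scrollMap]

theorem scrollMap_mrow2 (t : F) (c : Fin a ⊕ Fin b) :
    scrollMap F a b t (mrow2 F a b t c) = C t * X 2 * scrollMap F a b t (mrow1 F a b c) := by
  rcases c with c | c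
  · simp only [mrow1, mrow2, scrollMap_xv, Fin.val_succ, Fin.val_castSucc]
    ring
  · simp only [mrow1, mrow2, map_mul, scrollMap_yv, Fin.val_succ, Fin.val_castSucc,
      algHom_C, algebraMap_eq]
    ring

theorem I2M_le_ker_scrollMap (t : F) : I2M F a b t ≤ RingHom.ker (scrollMap F a b t) := by
  refine Ideal.span_le.mpr ?_
  rintro _ ⟨c, c', rfl⟩
  rw [SetLike.mem_coe, RingHom.mem_ker, map_sub, map_mul, map_mul, scrollMap_mrow2,
    scrollMap_mrow2]
  ring

theorem exists_linearMap_C_mul_X_pow {M : Type*} [AddCommMonoid M] [Module F M]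
    (L : ℕ → ℕ → ℕ → S →ₗ[F] M) :
    ∃ θ : MvPolynomial (Fin 3) S →ₗ[F] M,
      ∀ p q n c, θ (C c * (X 0 ^ p * X 1 ^ q * X 2 ^ n)) = L p q n c := by
  refine ⟨Finsupp.lsum F (fun e : Fin 3 →₀ ℕ => L (e 0) (e 1) (e 2)) ∘ₗ
    (AddMonoidAlgebra.coeffLinearEquiv F).toLinearMap, fun p q n c => ?_⟩
  have hmon : (C c * (X 0 ^ p * X 1 ^ q * X 2 ^ n) : MvPolynomial (Fin 3) S) =
      monomial (Finsupp.single 0 p + Finsupp.single 1 q + Finsupp.single 2 n) c := by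
    simp [X_pow_eq_monomial, monomial_mul, C_mul_monomial]
  rw [hmon]
  exact (sum_monomial_eq (b := fun e => L (e 0) (e 1) (e 2)) (map_zero _)).trans (by simp)

end ScrollMap

section Factorization

variable (F a b) in
/-- The ideal `I_e = I₂(MX) + I₂(MY) + J_e`. -/
abbrev Ie (e₁ e₂ : F) : Ideal (KPoly F a b) := I2MX F a b + I2MY F a b + Je F a b e₁ e₂

variable {A : Type*} [CommRing A] [Algebra F A] {e₁ e₂ : F} (π : KPoly F a b →ₐ[F] A)

/-- The images of `x₀,…,x_a` under `π` as a sequence on `ℕ`; indices wrap around after `a`. -/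
def xSeq (i : ℕ) : A := π (xv F a b (Fin.ofNat _ i))

/-- The images of `y₀,…,y_b` under `π` as a sequence on `ℕ`; indices wrap around after `b`. -/
def ySeq (j : ℕ) : A := π (yv F a b (Fin.ofNat _ j))

theorem map_xv (i : Fin (a + 1)) : π (xv F a b i) = xSeq π i := by
  rw [xSeq, Fin.ofNat_val_eq_self]

theorem map_yv (j : Fin (b + 1)) : π (yv F a b j) = ySeq π j := by
  rw [ySeq, Fin.ofNat_val_eq_self]

variable {π}

theorem hankelMinorsVanish_xSeq (h : I2MX F a b ≤ RingHom.ker π) :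
    HankelMinorsVanish a (xSeq π) := fun i j hi hj => by
  have hij := RingHom.mem_ker.mp (h (Ideal.subset_span ⟨⟨i, hi⟩, ⟨j, hj⟩, rfl⟩))
  simpa only [map_sub, map_mul, map_xv, Fin.val_succ, Fin.val_castSucc, sub_eq_zero] using hij

theorem hankelMinorsVanish_ySeq (h : I2MY F a b ≤ RingHom.ker π) :
    HankelMinorsVanish b (ySeq π) := fun i j hi hj => by
  have hij := RingHom.mem_ker.mp (h (Ideal.subset_span ⟨⟨i, hi⟩, ⟨j, hj⟩, rfl⟩))
  simpa only [map_sub, map_mul, map_yv, Fin.val_succ, Fin.val_castSucc, sub_eq_zero] using hij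

theorem bilinearFormsVanish_xSeq_ySeq (h : Je F a b e₁ e₂ ≤ RingHom.ker π) :
    BilinearFormsVanish a b e₁ e₂ (xSeq π) (ySeq π) := fun i j hi hj => by
  have hij := RingHom.mem_ker.mp (h (Ideal.subset_span ⟨i, j, hi, hj, rfl⟩))
  simpa only [map_add, map_sub, map_mul, algHom_C, map_xv, map_yv, ← Algebra.smul_def] using hij

theorem exists_map_monomial_eq_smul_stdMonomial {S : Type*} [CommRing S] [Algebra F S]
    (hx : HankelMinorsVanish a (xSeq π)) (hy : HankelMinorsVanish b (ySeq π)) (τ : S)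
    (s : Fin (a + 1) ⊕ Fin (b + 1) →₀ ℕ) (r : F) :
    ∃ (c : F) (p k q l : ℕ), k ≤ p * a ∧ l ≤ q * b ∧
      π (monomial s r) = c • (stdMonomial a (xSeq π) p k * stdMonomial b (ySeq π) q l) ∧
      scrollMap F a b τ (monomial s r) =
        c • (C (τ ^ k) * (X 0 ^ p * X 1 ^ q * X 2 ^ (k + l))) := by
  refine induction_on_monomial ?_ ?_ s r
  · refine fun r => ⟨r, 0, 0, 0, 0, by simp, by simp, ?_, ?_⟩
    · simp [stdMonomial, Algebra.smul_def]
    · simp [Algebra.smul_def]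
  · rintro f (i | j) ⟨c, p, k, q, l, hk, hl, hπ, hφ⟩
    · refine ⟨c, p + 1, i + k, q, l, by rw [Nat.succ_mul]; omega, hl, ?_, ?_⟩
      · rw [← xv, map_mul, hπ, map_xv, ← hx.mul_stdMonomial (by omega) hk, smul_mul_assoc]
        ring_nf
      · rw [← xv, map_mul, hφ, scrollMap_xv, smul_mul_assoc, C_pow, C_pow]
        ring_nf
    · refine ⟨c, p, k, q + 1, j + l, hk, by rw [Nat.succ_mul]; omega, ?_, ?_⟩
      · rw [← yv, map_mul, hπ, map_yv, ← hy.mul_stdMonomial (by omega) hl, smul_mul_assoc]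
        ring_nf
      · rw [← yv, map_mul, hφ, scrollMap_yv, smul_mul_assoc]
        ring_nf

theorem exists_linearMap_comp_scrollMap_omega (ha : 2 ≤ a) (hb : 2 ≤ b) (he₂ : IsUnit e₂)
    (h : Ie F a b e₁ e₂ ≤ RingHom.ker π) :
    ∃ θ : MvPolynomial (Fin 3) (RootAlgebra e₁ e₂) →ₗ[F] A,
      ∀ f, π f = θ (scrollMap F a b ω f) := by
  obtain ⟨⟨hMX, hMY⟩, hJ⟩ := by simpa only [Ie, Submodule.add_eq_sup, sup_le_iff] using h
  have hx := hankelMinorsVanish_xSeq hMX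
  have hy := hankelMinorsVanish_ySeq hMY
  have hQ := bilinearFormsVanish_xSeq_ySeq hJ
  choose L hL using fun p q n =>
    (bilinearFormsVanish_stdMonomial ha hb hx hy hQ p q).exists_linearMap_omega_pow he₂ n
  obtain ⟨θ, hθ⟩ := exists_linearMap_C_mul_X_pow L
  refine ⟨θ, fun f => ?_⟩
  induction f using MvPolynomial.induction_on' with
  | monomial s r =>
    obtain ⟨c, p, k, q, l, hk, hl, hπ, hφ⟩ :=
      exists_map_monomial_eq_smul_stdMonomial hx hy (ω : RootAlgebra e₁ e₂) s r
    rw [hπ, hφ, map_smul, hθ, hL p q (k + l) k l rfl hk hl]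
  | add f g hf hg => rw [map_add, map_add, map_add, hf, hg]

theorem ker_scrollMap_omega_le_Ie (ha : 2 ≤ a) (hb : 2 ≤ b) (he₂ : IsUnit e₂) :
    RingHom.ker (scrollMap F a b (ω : RootAlgebra e₁ e₂)) ≤ Ie F a b e₁ e₂ := by
  have hker : RingHom.ker (Ideal.Quotient.mkₐ F (Ie F a b e₁ e₂)) = Ie F a b e₁ e₂ :=
    Ideal.Quotient.mkₐ_ker F _
  obtain ⟨θ, hθ⟩ := exists_linearMap_comp_scrollMap_omega ha hb he₂ hker.ge
  intro f hf
  rw [← hker, RingHom.mem_ker, hθ, RingHom.mem_ker.mp hf, map_zero]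

end Factorization

section Ideals

variable (a b)

theorem I2MX_le_I2M (t : F) : I2MX F a b ≤ I2M F a b t := by
  refine Ideal.span_le.mpr ?_
  rintro _ ⟨c, c', rfl⟩
  exact Ideal.subset_span ⟨Sum.inl c, Sum.inl c', rfl⟩

theorem I2MY_le_I2M {t : F} (ht : IsUnit t) : I2MY F a b ≤ I2M F a b t := by
  refine Ideal.span_le.mpr ?_
  rintro _ ⟨c, c', rfl⟩
  rw [SetLike.mem_coe, ← Ideal.unit_mul_mem_iff_mem _ (ht.map C)]
  refine Ideal.subset_span ⟨Sum.inr c, Sum.inr c', ?_⟩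
  simp only [mrow1, mrow2]
  ring

theorem Je_le_I2M (t s : F) : Je F a b (t + s) (t * s) ≤ I2M F a b t := by
  have mixed_minor_mem {i j : ℕ} (hi : i < a) (hj : j < b) :
      xv F a b ⟨i + 1, by omega⟩ * yv F a b ⟨j, by omega⟩
        - C t * (xv F a b ⟨i, by omega⟩ * yv F a b ⟨j + 1, by omega⟩) ∈ I2M F a b t := by
    refine Ideal.subset_span ⟨Sum.inr ⟨j, hj⟩, Sum.inl ⟨i, hi⟩, ?_⟩
    simp only [mrow1, mrow2, Fin.castSucc_mk, Fin.succ_mk]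
    ring
  refine Ideal.span_le.mpr ?_
  rintro _ ⟨i, j, hi, hj, rfl⟩
  have h₁ := mixed_minor_mem (i := i + 1) (j := j) (by omega) (by omega)
  have h₂ := mixed_minor_mem (i := i) (j := j + 1) (by omega) (by omega)
  rw [SetLike.mem_coe]
  convert Ideal.sub_mem _ h₁ (Ideal.mul_mem_left _ (C s) h₂) using 1
  simp only [C_add, C_mul]
  ring

theorem Ie_le_I2M {t : F} (ht : IsUnit t) (s : F) : Ie F a b (t + s) (t * s) ≤ I2M F a b t :=
  sup_le (sup_le (I2MX_le_I2M a b t) (I2MY_le_I2M a b ht)) (Je_le_I2M a b t s)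

end Ideals

section Specialization

variable {e₁ e₂ t t₁ t₂ : F}

/-- The specialization `τ ↦ t` of `F[τ]/(τ² - e₁τ + e₂)` at a root `t ∈ F` of the polynomial. -/
def evalRoot (ht : t * t = e₁ * t - e₂) : RootAlgebra e₁ e₂ →ₐ[F] F :=
  QuadraticAlgebra.lift ⟨t, by simp only [smul_eq_mul]; linear_combination ht⟩

theorem evalRoot_apply (ht : t * t = e₁ * t - e₂) (z : RootAlgebra e₁ e₂) :
    evalRoot ht z = z.re + z.im * t := by
  simp [evalRoot]

theorem evalRoot_omega (ht : t * t = e₁ * t - e₂) : evalRoot ht ω = t := by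
  simp [evalRoot_apply]

theorem eq_zero_of_evalRoot_eq_zero (ht₁ : t₁ * t₁ = e₁ * t₁ - e₂) (ht₂ : t₂ * t₂ = e₁ * t₂ - e₂)
    (hne : t₁ - t₂ ∈ nonZeroDivisors F) {z : RootAlgebra e₁ e₂} (h₁ : evalRoot ht₁ z = 0)
    (h₂ : evalRoot ht₂ z = 0) : z = 0 := by
  rw [evalRoot_apply] at h₁ h₂
  have him : z.im = 0 := by
    refine (mem_nonZeroDivisors_iff_right.mp hne) _ ?_
    linear_combination h₁ - h₂
  exact QuadraticAlgebra.ext (by simpa [him] using h₁) him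

theorem ker_scrollMap_inf_ker_scrollMap_le (ht₁ : t₁ * t₁ = e₁ * t₁ - e₂)
    (ht₂ : t₂ * t₂ = e₁ * t₂ - e₂) (hne : t₁ - t₂ ∈ nonZeroDivisors F) :
    RingHom.ker (scrollMap F a b t₁) ⊓ RingHom.ker (scrollMap F a b t₂) ≤
      RingHom.ker (scrollMap F a b (ω : RootAlgebra e₁ e₂)) := by
  rintro f ⟨h₁, h₂⟩
  rw [SetLike.mem_coe, RingHom.mem_ker, ← evalRoot_omega ht₁, ← mapAlgHom_scrollMap] at h₁
  rw [SetLike.mem_coe, RingHom.mem_ker, ← evalRoot_omega ht₂, ← mapAlgHom_scrollMap] at h₂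
  rw [RingHom.mem_ker]
  refine MvPolynomial.ext _ _ fun d => ?_
  rw [coeff_zero]
  refine eq_zero_of_evalRoot_eq_zero ht₁ ht₂ hne ?_ ?_
  · simpa [coeff_map] using congrArg (coeff d) h₁
  · simpa [coeff_map] using congrArg (coeff d) h₂

end Specialization

theorem stmt0_general (F : Type*) [CommRing F] (a b : ℕ) (ha : 2 ≤ a) (hb : 2 ≤ b)
    (t1 t2 : F) (ht1 : IsUnit t1) (ht2 : IsUnit t2) (hne : t1 - t2 ∈ nonZeroDivisors F) :
    I2MX F a b + I2MY F a b + Je F a b (t1 + t2) (t1 * t2)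
      = I2M F a b t1 ⊓ I2M F a b t2 := by
  apply le_antisymm
  · refine le_inf (Ie_le_I2M a b ht1 t2) ?_
    rw [add_comm t1, mul_comm t1]
    exact Ie_le_I2M a b ht2 t1
  · calc I2M F a b t1 ⊓ I2M F a b t2
        ≤ RingHom.ker (scrollMap F a b t1) ⊓ RingHom.ker (scrollMap F a b t2) :=
          inf_le_inf (I2M_le_ker_scrollMap t1) (I2M_le_ker_scrollMap t2)
      _ ≤ RingHom.ker (scrollMap F a b (ω : RootAlgebra (t1 + t2) (t1 * t2))) :=
          ker_scrollMap_inf_ker_scrollMap_le (by ring) (by ring) hne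
      _ ≤ Ie F a b (t1 + t2) (t1 * t2) := ker_scrollMap_omega_le_Ie ha hb (ht1.mul ht2)

/-- For a field `F`, integers `a, b ≥ 2` and distinct nonzero
`t₁, t₂ ∈ F`, with `e₁ = t₁ + t₂`, `e₂ = t₁t₂`, one has
`I_e = I₂(m₁) ∩ I₂(m₂)` in `F[x₀,…,x_a, y₀,…,y_b]`. -/
theorem stmt0 (F : Type*) [Field F] (a b : ℕ) (ha : 2 ≤ a) (hb : 2 ≤ b)
    (t1 t2 : F) (ht1 : t1 ≠ 0) (ht2 : t2 ≠ 0) (hne : t1 ≠ t2) :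
    I2MX F a b + I2MY F a b + Je F a b (t1 + t2) (t1 * t2)
      = I2M F a b t1 ⊓ I2M F a b t2 :=
  stmt0_general F a b ha hb t1 t2 ht1.isUnit ht2.isUnit
    (mem_nonZeroDivisors_of_ne_zero (sub_ne_zero.mpr hne))

end
end

section
/- Let F be a field and a ≥ b ≥ 2 integers. Let P' = F[x₁,…,x_a, y₁,…,y_{b−1}] and let I' ⊆ P' be the ideal generated by the monomials x_i x_j for 1 ≤ i ≤ j ≤ a−1, the monomials y_i y_j for 1 ≤ i ≤ j ≤ b−1, and the monomials x_{i+2}y_j for 0 ≤ i ≤ a−2 and 1 ≤ j ≤ b−2 together with x_{i+2}x_a for 0 ≤ i ≤ a−2. Then P'/I' is a finite-dimensional F-vector space with dim_F(P'/I') = 2a + 2b, and its graded components have dimensions 1, a+b−1, a+b−1, 1 in degrees 0, 1, 2, 3 and dimension 0 in every degree ≥ 4. -/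
open MvPolynomial

noncomputable section

/-- The polynomial ring `P' = F[x₁,…,x_a, y₁,…,y_{b−1}]`: the summand
`Fin a` indexes the variables `x₁,…,x_a` (with `inl ⟨i−1⟩` representing `x_i`)
and `Fin (b−1)` indexes `y₁,…,y_{b−1}` (with `inr ⟨j−1⟩` representing `y_j`). -/
abbrev PPoly (F : Type*) [Field F] (a b : ℕ) : Type _ :=
  MvPolynomial (Fin a ⊕ Fin (b - 1)) F

variable (F : Type*) [Field F] (a b : ℕ)

/-- The monomial ideal `I' ⊆ P'` generated by `x_i x_j` (`1 ≤ i ≤ j ≤ a−1`),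
`y_i y_j` (`1 ≤ i ≤ j ≤ b−1`), `x_{i+2} y_j` (`0 ≤ i ≤ a−2`, `1 ≤ j ≤ b−2`)
and `x_{i+2} x_a` (`0 ≤ i ≤ a−2`). -/
def Iinit : Ideal (PPoly F a b) :=
  Ideal.span
    ({ f | ∃ i j : ℕ, ∃ _ : 1 ≤ i, ∃ _ : i ≤ j, ∃ _ : j ≤ a - 1,
        f = X (Sum.inl ⟨i - 1, by omega⟩) * X (Sum.inl ⟨j - 1, by omega⟩) }
      ∪ { f | ∃ i j : ℕ, ∃ _ : 1 ≤ i, ∃ _ : i ≤ j, ∃ _ : j ≤ b - 1,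
        f = X (Sum.inr ⟨i - 1, by omega⟩) * X (Sum.inr ⟨j - 1, by omega⟩) }
      ∪ { f | ∃ i j : ℕ, ∃ _ : i + 2 ≤ a, ∃ _ : 1 ≤ j, ∃ _ : j + 2 ≤ b,
        f = X (Sum.inl ⟨i + 1, by omega⟩) * X (Sum.inr ⟨j - 1, by omega⟩) }
      ∪ { f | ∃ i : ℕ, ∃ _ : i + 2 ≤ a,
        f = X (Sum.inl ⟨i + 1, by omega⟩) * X (Sum.inl ⟨a - 1, by omega⟩) })

/-- The `n`-th graded component of `P'/I'`: the image in the quotient of the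
space of homogeneous polynomials of degree `n`. -/
def gradedComp (n : ℕ) : Submodule F (PPoly F a b ⧸ Iinit F a b) :=
  (homogeneousSubmodule (Fin a ⊕ Fin (b - 1)) F n).map
    (Ideal.Quotient.mkₐ F (Iinit F a b)).toLinearMap

/-!
The generators of `I'` are the products `u v`, possibly with `u = v`, of variables that are *not*
adjacent in a graph on the variables, so the squarefree monomials supported on cliques form a basis
of `P'/I'`, graded by clique size. The edges of that graph are `{v, f v}` for the map `f` sending
`x₁ ↦ x_a ↦ y_{b-1} ↦ x₁`, every other `x_i` to `y_{b-1}` and every other `y_j` to `x₁`. Since each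
vertex has exactly one outgoing edge and there is no 2-cycle, there are as many edges as vertices,
the triangles are the 3-cycles of `f`, and four vertices never span the six edges of a 4-clique.
-/

section MonomialQuotient

variable {R σ M : Type*} [CommRing R] [AddCommGroup M] [Module R M]

theorem restrictScalars_span_monomial_eq_restrictSupport (S : Set (σ →₀ ℕ)) :
    (Ideal.span ((fun s => monomial s (1 : R)) '' S)).restrictScalars R =
      restrictSupport R (upperClosure S : Set (σ →₀ ℕ)) := by
  ext p
  exact mem_ideal_span_monomial_image

theorem disjoint_restrictSupport {S T : Set (σ →₀ ℕ)} (h : Disjoint S T) :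
    Disjoint (restrictSupport R S) (restrictSupport R T) := by
  refine Submodule.disjoint_def.2 fun p hS hT => ?_
  rw [← support_eq_empty, ← Finset.coe_eq_empty]
  exact Set.subset_empty_iff.1 (h hS hT)

theorem restrictSupport_union (S T : Set (σ →₀ ℕ)) :
    restrictSupport R (S ∪ T) = restrictSupport R S ⊔ restrictSupport R T := by
  simp only [restrictSupport_eq_span, Set.image_union, Submodule.span_union]

variable {f : MvPolynomial σ R →ₗ[R] M} {U : Set (σ →₀ ℕ)}

theorem map_restrictSupport_diff (hf : LinearMap.ker f = restrictSupport R U)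
    (T : Set (σ →₀ ℕ)) :
    (restrictSupport R (T \ U)).map f = (restrictSupport R T).map f := by
  have hker : (restrictSupport R (T ∩ U)).map f = ⊥ :=
    LinearMap.le_ker_iff_map.1 (hf ▸ restrictSupport_mono R Set.inter_subset_right)
  conv_rhs => rw [← Set.sdiff_union_inter T U, restrictSupport_union, Submodule.map_sup, hker,
    sup_bot_eq]

/-- The images of the monomials with exponent in `T \ U` as a basis of the image of the polynomials
supported on `T`, under a linear map whose kernel consists of the polynomials supported on `U`. -/
def basisMapRestrictSupport (hf : LinearMap.ker f = restrictSupport R U) (T : Set (σ →₀ ℕ)) :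
    Module.Basis ↥(T \ U) R ((restrictSupport R T).map f) :=
  (basisRestrictSupport R (T \ U)).map <|
    (LinearEquiv.ofInjective (f.domRestrict (restrictSupport R (T \ U)))
      (LinearMap.injective_domRestrict_iff.2 <|
        hf ▸ disjoint_restrictSupport Set.disjoint_sdiff_left)).trans <|
    LinearEquiv.ofEq _ _ <| by
      rw [LinearMap.range_domRestrict, map_restrictSupport_diff hf]

end MonomialQuotient

section NonadjIdeal

variable {V : Type*} (R : Type*) [CommRing R] (G : SimpleGraph V)

/-- The exponents of the degree two monomials on non-adjacent pairs of vertices of `G`. A vertex is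
not adjacent to itself, so the exponents of all squares of variables are included. -/
def nonadjExponents : Set (V →₀ ℕ) :=
  {m | ∃ u v, ¬ G.Adj u v ∧ m = Finsupp.single u 1 + Finsupp.single v 1}

/-- The monomial ideal generated by `X u * X v` for non-adjacent `u`, `v`, including `u = v`: the
Stanley–Reisner ideal of the clique complex of `G` together with the squares of the variables. -/
def nonadjIdeal : Ideal (MvPolynomial V R) :=
  Ideal.span ((fun m => monomial m (1 : R)) '' nonadjExponents G)

variable {R G}

theorem X_mul_X_mem_nonadjIdeal {u v : V} (h : ¬ G.Adj u v) :
    (X u * X v : MvPolynomial V R) ∈ nonadjIdeal R G :=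
  Ideal.subset_span ⟨_, ⟨u, v, h, rfl⟩, by simp [X, monomial_mul]⟩

theorem nonadjIdeal_le_iff {I : Ideal (MvPolynomial V R)} :
    nonadjIdeal R G ≤ I ↔ ∀ u v, ¬ G.Adj u v → X u * X v ∈ I := by
  refine ⟨fun h u v huv => h (X_mul_X_mem_nonadjIdeal huv), fun h => Ideal.span_le.2 ?_⟩
  rintro _ ⟨_, ⟨u, v, huv, rfl⟩, rfl⟩
  simpa [X, monomial_mul] using h u v huv

theorem single_add_single_le_iff {u v : V} (huv : u ≠ v) {m : V →₀ ℕ} :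
    Finsupp.single u 1 + Finsupp.single v 1 ≤ m ↔ u ∈ m.support ∧ v ∈ m.support := by
  classical
  simp only [Finsupp.le_def, Finsupp.add_apply, Finsupp.single_apply, Finsupp.mem_support_iff]
  refine ⟨fun h => ⟨?_, ?_⟩, fun h w => ?_⟩
  · have := h u; grind
  · have := h v; grind
  · grind

theorem notMem_upperClosure_nonadjExponents_iff {m : V →₀ ℕ} :
    m ∉ upperClosure (nonadjExponents G) ↔ (∀ v, m v ≤ 1) ∧ G.IsClique m.support := by
  have hsq (v : V) : Finsupp.single v 1 + Finsupp.single v 1 ≤ m ↔ ¬ m v ≤ 1 := by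
    rw [← Finsupp.single_add, Finsupp.single_le_iff]; omega
  simp only [mem_upperClosure, nonadjExponents, Set.mem_ofPred_eq]
  constructor
  · intro h
    refine ⟨fun v => by_contra fun hv => h ⟨_, ⟨v, v, G.loopless.irrefl v, rfl⟩, (hsq v).2 hv⟩, ?_⟩
    exact fun u hu v hv huv => by_contra fun hadj =>
      h ⟨_, ⟨u, v, hadj, rfl⟩, (single_add_single_le_iff huv).2 ⟨hu, hv⟩⟩
  · rintro ⟨hle, hG⟩ ⟨_, ⟨u, v, hadj, rfl⟩, hm⟩
    obtain rfl | huv := eq_or_ne u v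
    · exact (hsq u).1 hm (hle u)
    · obtain ⟨hu, hv⟩ := (single_add_single_le_iff huv).1 hm
      exact hadj (hG hu hv huv)

theorem bijOn_support_compl_upperClosure :
    Set.BijOn Finsupp.support (upperClosure (nonadjExponents G) : Set (V →₀ ℕ))ᶜ
      {s | G.IsClique s} := by
  classical
  refine ⟨fun m hm => (notMem_upperClosure_nonadjExponents_iff.1 hm).2, ?_, fun s hs => ?_⟩
  · intro m hm n hn hmn
    ext v
    have hm1 := (notMem_upperClosure_nonadjExponents_iff.1 hm).1 v
    have hn1 := (notMem_upperClosure_nonadjExponents_iff.1 hn).1 v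
    have hv : m v ≠ 0 ↔ n v ≠ 0 := by
      rw [← Finsupp.mem_support_iff, hmn, Finsupp.mem_support_iff]
    omega
  · have hsupp : (Finsupp.indicator s fun _ _ => 1 : V →₀ ℕ).support = s := by
      ext v; simp [Finsupp.indicator_apply]
    refine ⟨_, notMem_upperClosure_nonadjExponents_iff.2 ⟨fun v => ?_, ?_⟩, hsupp⟩
    · rw [Finsupp.indicator_apply]; split_ifs <;> simp
    · rwa [hsupp]

theorem bijOn_support_degree_eq_diff_upperClosure (n : ℕ) :
    Set.BijOn Finsupp.support
      ({m : V →₀ ℕ | m.degree = n} \ (upperClosure (nonadjExponents G) : Set (V →₀ ℕ)))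
      (G.cliqueSet n) := by
  have hdeg {m : V →₀ ℕ} (hm : m ∉ upperClosure (nonadjExponents G)) :
      m.degree = m.support.card := by
    rw [Finsupp.degree_apply, Finset.card_eq_sum_ones]
    refine Finset.sum_congr rfl fun v hv => le_antisymm ?_ (Finsupp.mem_support_iff.1 hv).bot_lt
    exact (notMem_upperClosure_nonadjExponents_iff.1 hm).1 v
  refine ⟨fun m hm => ?_, bijOn_support_compl_upperClosure.injOn.mono fun m hm => hm.2,
    fun s hs => ?_⟩
  · exact ⟨bijOn_support_compl_upperClosure.mapsTo hm.2, (hdeg hm.2).symm.trans hm.1⟩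
  · obtain ⟨m, hm, rfl⟩ := bijOn_support_compl_upperClosure.surjOn hs.isClique
    exact ⟨m, ⟨(hdeg hm).trans hs.card_eq, hm⟩, rfl⟩

theorem ker_mk_nonadjIdeal :
    LinearMap.ker (Ideal.Quotient.mkₐ R (nonadjIdeal R G)).toLinearMap =
      restrictSupport R (upperClosure (nonadjExponents G) : Set (V →₀ ℕ)) := by
  rw [← restrictScalars_span_monomial_eq_restrictSupport]
  ext p
  exact Ideal.Quotient.eq_zero_iff_mem

variable (R G)

theorem finrank_map_homogeneousSubmodule_nonadjIdeal [Nontrivial R] (n : ℕ) :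
    Module.finrank R ((homogeneousSubmodule V R n).map
      (Ideal.Quotient.mkₐ R (nonadjIdeal R G)).toLinearMap) = (G.cliqueSet n).ncard := by
  rw [homogeneousSubmodule_eq_finsupp_supported, ← restrictSupport,
    Module.finrank_eq_nat_card_basis (basisMapRestrictSupport ker_mk_nonadjIdeal _),
    Nat.card_coe_set_eq, (bijOn_support_degree_eq_diff_upperClosure n).ncard_eq]

/-- The basis of the quotient by `nonadjIdeal R G` given by the monomials outside the ideal. -/
def nonadjIdealQuotientBasis :
    Module.Basis ↥(upperClosure (nonadjExponents G) : Set (V →₀ ℕ))ᶜ R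
      (MvPolynomial V R ⧸ nonadjIdeal R G) :=
  ((basisMapRestrictSupport ker_mk_nonadjIdeal Set.univ).map <|
    LinearEquiv.ofTop _ <| by
      rw [restrictSupport_univ, Submodule.map_top, LinearMap.range_eq_top]
      exact Ideal.Quotient.mkₐ_surjective R _).reindex <|
    Equiv.setCongr (Set.compl_eq_univ_sdiff _).symm

theorem finite_quotient_nonadjIdeal [Finite V] :
    Module.Finite R (MvPolynomial V R ⧸ nonadjIdeal R G) :=
  have := (bijOn_support_compl_upperClosure (G := G)).finite_iff_finite.2 (Set.toFinite _)
  have : Finite ↥(upperClosure (nonadjExponents G) : Set (V →₀ ℕ))ᶜ := this.to_subtype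
  .of_basis (nonadjIdealQuotientBasis R G)

theorem finrank_quotient_nonadjIdeal [Nontrivial R] :
    Module.finrank R (MvPolynomial V R ⧸ nonadjIdeal R G) =
      {s : Finset V | G.IsClique s}.ncard := by
  rw [Module.finrank_eq_nat_card_basis (nonadjIdealQuotientBasis R G), Nat.card_coe_set_eq,
    bijOn_support_compl_upperClosure.ncard_eq]

end NonadjIdeal

section CliqueCount

variable {V : Type*} (G : SimpleGraph V)

theorem ncard_cliqueSet_zero : (G.cliqueSet 0).ncard = 1 := by
  rw [G.cliqueSet_zero, Set.ncard_singleton]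

theorem ncard_cliqueSet_one : (G.cliqueSet 1).ncard = Nat.card V := by
  rw [G.cliqueSet_one, Set.ncard_range_of_injective Finset.singleton_injective]

variable {G}

theorem ncard_isClique_eq_sum_of_cliqueFree [Finite V] {k : ℕ} (hG : G.CliqueFree k) :
    {s : Finset V | G.IsClique s}.ncard = ∑ n ∈ Finset.range k, (G.cliqueSet n).ncard := by
  classical
  have := Fintype.ofFinite V
  have hcard {s : Finset V} (hs : G.IsClique s) : s.card < k := by
    by_contra! hk
    exact hG.mono hk s ⟨hs, rfl⟩
  rw [Set.ncard_eq_toFinset_card', Finset.card_eq_sum_card_fiberwise (f := Finset.card)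
    (t := Finset.range k) fun s hs => by simpa using hcard (by simpa using hs)]
  refine Finset.sum_congr rfl fun n _ => ?_
  rw [Set.ncard_eq_toFinset_card']
  congr 1
  ext s
  simp [SimpleGraph.isNClique_iff]

end CliqueCount

section FunctionalGraph

variable {V : Type*}

/-- The graph of a self-map `f`: each `v` is joined to `f v`, orientations and loops being
dropped. -/
def functionalGraph (f : V → V) : SimpleGraph V :=
  SimpleGraph.fromRel fun u v => f u = v

variable {f : V → V}

theorem functionalGraph_adj {u v : V} :
    (functionalGraph f).Adj u v ↔ u ≠ v ∧ (f u = v ∨ f v = u) :=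
  SimpleGraph.fromRel_adj _ _ _

theorem ncard_cliqueSet_two_functionalGraph (hf : ∀ v, f (f v) ≠ v) :
    ((functionalGraph f).cliqueSet 2).ncard = Nat.card V := by
  classical
  have hfix (v : V) : v ≠ f v := fun h => hf v (by rw [← h, ← h])
  have hrange : (functionalGraph f).cliqueSet 2 = Set.range fun v => ({v, f v} : Finset V) := by
    ext s
    simp only [SimpleGraph.mem_cliqueSet_iff, SimpleGraph.isNClique_iff, Set.mem_range]
    constructor
    · rintro ⟨hs, hcard⟩
      obtain ⟨u, v, huv, rfl⟩ := Finset.card_eq_two.1 hcard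
      obtain rfl | rfl := (functionalGraph_adj.1 (hs (by simp) (by simp) huv)).2
      · exact ⟨u, rfl⟩
      · exact ⟨v, Finset.pair_comm _ _⟩
    · rintro ⟨v, rfl⟩
      refine ⟨?_, Finset.card_pair (hfix v)⟩
      rw [Finset.coe_pair, SimpleGraph.isClique_pair]
      exact fun h => functionalGraph_adj.2 ⟨h, .inl rfl⟩
  have hinj : Function.Injective fun v => ({v, f v} : Finset V) := by
    intro u v (huv : {u, f u} = {v, f v})
    have hu : u = v ∨ u = f v := by
      have hmem : u ∈ ({v, f v} : Finset V) := huv ▸ Finset.mem_insert_self _ _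
      simpa using hmem
    have hv : v = u ∨ v = f u := by
      have hmem : v ∈ ({u, f u} : Finset V) := huv ▸ Finset.mem_insert_self _ _
      simpa using hmem
    by_contra hne
    have hfv : f v = u := (hu.resolve_left hne).symm
    exact hf u (by rw [← hv.resolve_left (Ne.symm hne), hfv])
  rw [hrange, Set.ncard_range_of_injective hinj]

theorem apply_eq_or_apply_eq_of_adj {u v w : V} (huv : (functionalGraph f).Adj u v)
    (huw : (functionalGraph f).Adj u w) (hvw : (functionalGraph f).Adj v w) :
    f u = v ∨ f u = w := by
  rw [functionalGraph_adj] at huv huw hvw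
  by_contra! h
  have hv : f v = u := huv.2.resolve_left h.1
  have hw : f w = u := huw.2.resolve_left h.2
  exact hvw.2.elim (fun hvw' => huw.1 (hv.symm.trans hvw')) fun hwv => huv.1 (hw.symm.trans hwv)

theorem cliqueFree_four_functionalGraph : (functionalGraph f).CliqueFree 4 := by
  classical
  intro s hs
  obtain ⟨p, q, r, t, hpq, hpr, hpt, hqr, hqt, hrt, rfl⟩ := Finset.card_eq_four.1 hs.card_eq
  have hadj : ∀ u ∈ ({p, q, r, t} : Finset V), ∀ v ∈ ({p, q, r, t} : Finset V), u ≠ v →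
      (functionalGraph f).Adj u v := fun u hu v hv => hs.isClique hu hv
  have hq_or_hr : f p = q ∨ f p = r := by
    apply apply_eq_or_apply_eq_of_adj <;> apply hadj <;> simp [*]
  have hq_or_ht : f p = q ∨ f p = t := by
    apply apply_eq_or_apply_eq_of_adj <;> apply hadj <;> simp [*]
  have hr_or_ht : f p = r ∨ f p = t := by
    apply apply_eq_or_apply_eq_of_adj <;> apply hadj <;> simp [*]
  grind

theorem iterate_three_eq_of_adj {u v w : V} (huv : (functionalGraph f).Adj u v)
    (huw : (functionalGraph f).Adj u w) (hvw : (functionalGraph f).Adj v w) :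
    f (f (f u)) = u := by
  wlog hu : f u = v generalizing v w
  · exact this huw huv hvw.symm
      ((apply_eq_or_apply_eq_of_adj huv huw hvw).resolve_left hu)
  have hw : f w = u := (functionalGraph_adj.1 huw).2.resolve_left (hu.trans_ne hvw.ne)
  have hv : f v = w := (functionalGraph_adj.1 hvw).2.resolve_right (hw.trans_ne huv.ne)
  rw [hu, hv, hw]

theorem iterate_three_eq_of_mem_isNClique_three {s : Finset V}
    (hs : (functionalGraph f).IsNClique 3 s) {v : V} (hv : v ∈ s) : f (f (f v)) = v := by
  classical
  obtain ⟨p, q, r, hpq, hpr, hqr, rfl⟩ := SimpleGraph.is3Clique_iff.1 hs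
  simp only [Finset.mem_insert, Finset.mem_singleton] at hv
  obtain rfl | rfl | rfl := hv
  · exact iterate_three_eq_of_adj hpq hpr hqr
  · exact iterate_three_eq_of_adj hpq.symm hqr hpr
  · exact iterate_three_eq_of_adj hpr.symm hqr.symm hpq

theorem isNClique_three_of_iterate_three_eq [DecidableEq V] (hf : ∀ v, f (f v) ≠ v) {v : V}
    (hv : f (f (f v)) = v) : (functionalGraph f).IsNClique 3 {v, f v, f (f v)} := by
  have hfix (w : V) : w ≠ f w := fun h => hf w (by rw [← h, ← h])
  rw [SimpleGraph.is3Clique_triple_iff]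
  simp only [functionalGraph_adj]
  exact ⟨⟨hfix _, .inl trivial⟩, ⟨(hf v).symm, .inr hv⟩, ⟨hfix _, .inl trivial⟩⟩

theorem ncard_cliqueSet_three_functionalGraph (hf : ∀ v, f (f v) ≠ v) {v : V}
    (hv : ∀ w, f (f (f w)) = w ↔ w = v ∨ w = f v ∨ w = f (f v)) :
    ((functionalGraph f).cliqueSet 3).ncard = 1 := by
  classical
  have hclique := isNClique_three_of_iterate_three_eq hf ((hv v).2 (.inl rfl))
  refine Set.ncard_eq_one.2 ⟨{v, f v, f (f v)}, Set.eq_singleton_iff_unique_mem.2 ⟨hclique, ?_⟩⟩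
  intro s hs
  refine Finset.eq_of_subset_of_card_le (fun w hw => ?_) (hclique.card_eq.trans_le hs.card_eq.ge)
  simpa using (hv w).1 (iterate_three_eq_of_mem_isNClique_three hs hw)

end FunctionalGraph

section InitialIdeal

variable {a b} (ha : 2 ≤ a) (hb : 2 ≤ b)

/-- The self-map `f` of the variables whose functional graph has `Iinit` as its ideal of
non-adjacent pairs: `x₁ ↦ x_a ↦ y_{b-1} ↦ x₁`, `x_i ↦ y_{b-1}` for `i ≠ 1` and `y_j ↦ x₁`. -/
def variableMap : Fin a ⊕ Fin (b - 1) → Fin a ⊕ Fin (b - 1)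
  | .inl i => if i.val = 0 then .inl ⟨a - 1, by omega⟩ else .inr ⟨b - 2, by omega⟩
  | .inr _ => .inl ⟨0, by omega⟩

theorem variableMap_variableMap_ne (v : Fin a ⊕ Fin (b - 1)) :
    variableMap ha hb (variableMap ha hb v) ≠ v := by
  rcases v with i | j
  · by_cases hi : i.val = 0
    · simp [variableMap, hi, show a - 1 ≠ 0 by omega]
    · simp [variableMap, hi, Fin.ext_iff, Ne.symm hi]
  · simp [variableMap]

theorem variableMap_iterate_three_eq_iff (v : Fin a ⊕ Fin (b - 1)) :
    variableMap ha hb (variableMap ha hb (variableMap ha hb v)) = v ↔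
      v = .inl ⟨0, by omega⟩ ∨ v = variableMap ha hb (.inl ⟨0, by omega⟩) ∨
        v = variableMap ha hb (variableMap ha hb (.inl ⟨0, by omega⟩)) := by
  have ha' : a - 1 ≠ 0 := by omega
  rcases v with i | j
  · by_cases hi : i.val = 0 <;> simp [variableMap, hi, ha', Fin.ext_iff, eq_comm]
  · simp [variableMap, ha', Fin.ext_iff, eq_comm]

theorem variableMap_adj_inl_inl {i j : Fin a} :
    (functionalGraph (variableMap ha hb)).Adj (.inl i) (.inl j) ↔
      i.val = 0 ∧ j.val = a - 1 ∨ i.val = a - 1 ∧ j.val = 0 := by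
  by_cases hi : i.val = 0 <;> by_cases hj : j.val = 0 <;>
    simp [functionalGraph_adj, variableMap, Fin.ext_iff, hi, hj] <;> omega

theorem variableMap_adj_inl_inr {i : Fin a} {j : Fin (b - 1)} :
    (functionalGraph (variableMap ha hb)).Adj (.inl i) (.inr j) ↔ i.val = 0 ∨ j.val = b - 2 := by
  by_cases hi : i.val = 0 <;>
    simp [functionalGraph_adj, variableMap, Fin.ext_iff, hi]
  omega

theorem variableMap_not_adj_inr_inr {i j : Fin (b - 1)} :
    ¬ (functionalGraph (variableMap ha hb)).Adj (.inr i) (.inr j) := by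
  simp [functionalGraph_adj, variableMap]

theorem X_inl_mul_X_inl_mem_Iinit {i j : Fin a} (hij : i ≤ j)
    (h : ¬ (i.val = 0 ∧ j.val = a - 1)) :
    (X (.inl i) * X (.inl j) : PPoly F a b) ∈ Iinit F a b := by
  rw [Fin.le_def] at hij
  refine Ideal.subset_span ?_
  obtain hj | hj := eq_or_ne j.val (a - 1)
  · have hi : 1 ≤ i.val := by omega
    exact .inr ⟨i.val - 1, by omega, by simp [Nat.sub_add_cancel hi, ← hj]⟩
  · exact .inl (.inl (.inl ⟨i.val + 1, j.val + 1, by omega, by omega, by omega, rfl⟩))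

theorem X_inr_mul_X_inr_mem_Iinit {i j : Fin (b - 1)} (hij : i ≤ j) :
    (X (.inr i) * X (.inr j) : PPoly F a b) ∈ Iinit F a b := by
  rw [Fin.le_def] at hij
  exact Ideal.subset_span
    (.inl (.inl (.inr ⟨i.val + 1, j.val + 1, by omega, by omega, by omega, rfl⟩)))

theorem X_inl_mul_X_inr_mem_Iinit {i : Fin a} {j : Fin (b - 1)} (hi : i.val ≠ 0)
    (hj : j.val ≠ b - 2) : (X (.inl i) * X (.inr j) : PPoly F a b) ∈ Iinit F a b := by
  refine Ideal.subset_span (.inl (.inr ⟨i.val - 1, j.val + 1, by omega, by omega, by omega, ?_⟩))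
  simp [Nat.sub_add_cancel (Nat.pos_of_ne_zero hi)]

theorem Iinit_le_nonadjIdeal :
    Iinit F a b ≤ nonadjIdeal F (functionalGraph (variableMap ha hb)) := by
  rw [Iinit, Ideal.span_le]
  rintro _ (((⟨i, j, hi, hij, hj, rfl⟩ | ⟨i, j, hi, hij, hj, rfl⟩) | ⟨i, j, hi, hj, hjb, rfl⟩) |
    ⟨i, hi, rfl⟩) <;> refine X_mul_X_mem_nonadjIdeal ?_
  · rw [variableMap_adj_inl_inl]; simp only; omega
  · exact variableMap_not_adj_inr_inr ha hb
  · rw [variableMap_adj_inl_inr]; simp only; omega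
  · rw [variableMap_adj_inl_inl]; simp only; omega

theorem nonadjIdeal_le_Iinit :
    nonadjIdeal F (functionalGraph (variableMap ha hb)) ≤ Iinit F a b := by
  refine nonadjIdeal_le_iff.2 ?_
  rintro (i | i) (j | j) h
  · rw [variableMap_adj_inl_inl] at h
    obtain hij | hji := le_total i j
    · exact X_inl_mul_X_inl_mem_Iinit F hij (by tauto)
    · rw [mul_comm]
      exact X_inl_mul_X_inl_mem_Iinit F hji (by tauto)
  · rw [variableMap_adj_inl_inr, not_or] at h
    exact X_inl_mul_X_inr_mem_Iinit F h.1 h.2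
  · rw [SimpleGraph.adj_comm, variableMap_adj_inl_inr, not_or] at h
    rw [mul_comm]
    exact X_inl_mul_X_inr_mem_Iinit F h.1 h.2
  · obtain hij | hji := le_total i j
    · exact X_inr_mul_X_inr_mem_Iinit F hij
    · rw [mul_comm]
      exact X_inr_mul_X_inr_mem_Iinit F hji

theorem Iinit_eq_nonadjIdeal :
    Iinit F a b = nonadjIdeal F (functionalGraph (variableMap ha hb)) :=
  le_antisymm (Iinit_le_nonadjIdeal F ha hb) (nonadjIdeal_le_Iinit F ha hb)

theorem finrank_gradedComp (n : ℕ) :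
    Module.finrank F (gradedComp F a b n) =
      ((functionalGraph (variableMap ha hb)).cliqueSet n).ncard := by
  have h := finrank_map_homogeneousSubmodule_nonadjIdeal F (functionalGraph (variableMap ha hb)) n
  rwa [← Iinit_eq_nonadjIdeal F ha hb] at h

theorem finrank_quotient_Iinit :
    Module.finrank F (PPoly F a b ⧸ Iinit F a b) =
      {s : Finset (Fin a ⊕ Fin (b - 1)) |
        (functionalGraph (variableMap ha hb)).IsClique s}.ncard :=
  Iinit_eq_nonadjIdeal F ha hb ▸ finrank_quotient_nonadjIdeal F _

end InitialIdeal

theorem stmt7_general (ha : 2 ≤ a) (hb : 2 ≤ b) :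
    Module.Finite F (PPoly F a b ⧸ Iinit F a b)
    ∧ Module.finrank F (PPoly F a b ⧸ Iinit F a b) = 2 * a + 2 * b
    ∧ Module.finrank F (gradedComp F a b 0) = 1
    ∧ Module.finrank F (gradedComp F a b 1) = a + b - 1
    ∧ Module.finrank F (gradedComp F a b 2) = a + b - 1
    ∧ Module.finrank F (gradedComp F a b 3) = 1
    ∧ ∀ n : ℕ, 4 ≤ n → Module.finrank F (gradedComp F a b n) = 0 := by
  have hf := variableMap_variableMap_ne ha hb
  have hV : Nat.card (Fin a ⊕ Fin (b - 1)) = a + b - 1 := by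
    rw [Nat.card_sum, Nat.card_fin, Nat.card_fin]
    omega
  have h0 := ncard_cliqueSet_zero (functionalGraph (variableMap ha hb))
  have h1 := (ncard_cliqueSet_one (functionalGraph (variableMap ha hb))).trans hV
  have h2 := (ncard_cliqueSet_two_functionalGraph hf).trans hV
  have h3 := ncard_cliqueSet_three_functionalGraph hf (variableMap_iterate_three_eq_iff ha hb)
  have hfree := cliqueFree_four_functionalGraph (f := variableMap ha hb)
  simp only [finrank_gradedComp F ha hb]
  refine ⟨Iinit_eq_nonadjIdeal F ha hb ▸ finite_quotient_nonadjIdeal F _, ?_, h0, h1, h2, h3,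
    fun n hn => ?_⟩
  · rw [finrank_quotient_Iinit F ha hb, ncard_isClique_eq_sum_of_cliqueFree hfree]
    simp only [Finset.sum_range_succ, Finset.sum_range_zero, h0, h1, h2, h3]
    omega
  · rw [(hfree.mono hn).cliqueSet, Set.ncard_empty]

/-- For a field `F` and integers `a ≥ b ≥ 2`, the quotient
`P'/I'` is a finite-dimensional `F`-vector space of dimension `2a + 2b`, whose
graded components have dimensions `1, a+b−1, a+b−1, 1` in degrees `0, 1, 2, 3`
and dimension `0` in every degree `≥ 4`. -/
theorem stmt7 (hab : b ≤ a) (hb : 2 ≤ b) :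
    Module.Finite F (PPoly F a b ⧸ Iinit F a b)
    ∧ Module.finrank F (PPoly F a b ⧸ Iinit F a b) = 2 * a + 2 * b
    ∧ Module.finrank F (gradedComp F a b 0) = 1
    ∧ Module.finrank F (gradedComp F a b 1) = a + b - 1
    ∧ Module.finrank F (gradedComp F a b 2) = a + b - 1
    ∧ Module.finrank F (gradedComp F a b 3) = 1
    ∧ ∀ n : ℕ, 4 ≤ n → Module.finrank F (gradedComp F a b n) = 0 :=
  stmt7_general F a b (hb.trans hab) hb

end
end

section
/- Let F be a field, let a ≥ b ≥ 2, let t₁, t₂ ∈ F be nonzero, and set e₁ = t₁ + t₂, e₂ = t₁t₂. Let P = F[x₀,…,x_a, y₀,…,y_b] and let I_e = I₂(MX) + I₂(MY) + J_e. Then the images of x₀, x_a − y₀, y_b form a regular sequence on the quotient ring P/I_e. -/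
open MvPolynomial

noncomputable section

variable (F : Type*) [CommRing F] (a b : ℕ)

/-!
Let `E = F[ρ] / (1 - e₁ ρ + e₂ ρ²)`; since `e₂` is invertible, so is `ρ`. The assignment
`x_i ↦ X tⁱ`, `y_j ↦ Y (ρ t)ʲ` kills `I_e`. Modulo the minors, a monomial in the `x_i` depends only
on its degree `m` and its weight `k`, and a monomial in the `y_j` only on its degree `n` and its
weight `l`, while the bilinear forms `Q_{i,j}` say that for fixed `m`, `n` and `d = k + l` these
products satisfy, as a sequence in `l`, the recurrence of the powers `ρˡ`. Hence they are the images
of the `ρˡ` under an `F`-linear map, and `P / I_e` embeds into the Laurent polynomials over `E`.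

The image consists of the Laurent polynomials whose coefficient at `Xᵐ Yⁿ tᵈ` lies in the span of
the powers `ρˡ` with `max 0 (d - m a) ≤ l ≤ min (n b) d`. The ideals `(x₀)`, `(y_b)` and
`(x₀, y_b)` correspond to replacing `max 0` by other functions `κ`. The factor `y_b` becomes a
monomial. Multiplication by `x_a - y₀ ↦ X tᵃ - Y` compares the coefficients at
`(m - 1, n, d - a)` and `(m, n - 1, d)`; these points share the value of `d - m a`, so membership
propagates along a line until it leaves the region `m, n ≥ 0`. This gives regularity for
`x₀, y_b, x_a - y₀` and for `x₀, x_a - y₀`, from which `y_b` can be moved to the end.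
-/

section ZPowSpan

variable {E : Type*} [CommRing E] [Algebra F E] (σ : Eˣ)

/-- The `F`-span of the powers `σ ^ l` of a unit with `p ≤ l ≤ q`. -/
def zpowSpan (p q : ℤ) : Submodule F E :=
  Submodule.span F ((fun l : ℤ => ((σ ^ l : Eˣ) : E)) '' Set.Icc p q)

variable {F} {σ} {p q p' q' c : ℤ} {e : E}

lemma zpowSpan_mono (hp : p' ≤ p) (hq : q ≤ q') : zpowSpan F σ p q ≤ zpowSpan F σ p' q' :=
  Submodule.span_mono (Set.image_mono (Set.Icc_subset_Icc hp hq))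

lemma zpowSpan_eq_bot (h : q < p) : zpowSpan F σ p q = ⊥ := by
  simp [zpowSpan, Set.Icc_eq_empty_of_lt h]

lemma zpow_mul_mem_zpowSpan (he : e ∈ zpowSpan F σ p q) :
    ((σ ^ c : Eˣ) : E) * e ∈ zpowSpan F σ (p + c) (q + c) := by
  suffices zpowSpan F σ p q ≤
      (zpowSpan F σ (p + c) (q + c)).comap (LinearMap.mulLeft F ((σ ^ c : Eˣ) : E)) from this he
  refine Submodule.span_le.2 ?_
  rintro _ ⟨l, ⟨hpl, hlq⟩, rfl⟩
  refine Submodule.subset_span ⟨l + c, ⟨by omega, by omega⟩, ?_⟩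
  simp [zpow_add, mul_comm]

lemma zpow_mul_mem_zpowSpan_iff :
    ((σ ^ c : Eˣ) : E) * e ∈ zpowSpan F σ p q ↔ e ∈ zpowSpan F σ (p - c) (q - c) := by
  refine ⟨fun h => ?_, fun h => ?_⟩
  · simpa [← mul_assoc, ← Units.val_mul, sub_eq_add_neg] using
      zpow_mul_mem_zpowSpan (c := -c) h
  · simpa using zpow_mul_mem_zpowSpan (c := c) h

end ZPowSpan

section Window

/-- Laurent polynomials over `E` in three variables `X`, `Y`, `t`; the exponents `(m, n, d)` are
those of `X ^ m * Y ^ n * t ^ d`. -/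
abbrev LaurentRing (E : Type*) [CommRing E] : Type _ := AddMonoidAlgebra E (ℤ × ℤ × ℤ)

open AddMonoidAlgebra (single)

variable {E : Type*} [CommRing E] [Algebra F E]

lemma coeff_single_mul (i j k m n d : ℤ) (e : E) (f : LaurentRing E) :
    (single (i, j, k) e * f).coeff (m, n, d) = e * f.coeff (m - i, n - j, d - k) := by
  simp [AddMonoidAlgebra.coeff_single_mul_apply, sub_eq_neg_add]

variable (σ : Eˣ)

/-- The Laurent polynomials whose coefficient at `X ^ m * Y ^ n * t ^ d` is a combination of the
powers `σ ^ l` with `κ (d - m * a) ≤ l ≤ min (n * b) d`. The case `κ = max 0` is the image of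
`P / I_e`; the other bounds `κ` describe its ideals generated by `x₀` and `y_b`. -/
def windowSubmodule (κ : ℤ → ℤ) : Submodule F (LaurentRing E) where
  carrier := {f | ∀ m n d : ℤ,
    f.coeff (m, n, d) ∈ zpowSpan F σ (κ (d - m * a)) (min (n * b) d)}
  add_mem' hf hg m n d := add_mem (hf m n d) (hg m n d)
  zero_mem' _ _ _ := zero_mem _
  smul_mem' c _ hf m n d := Submodule.smul_mem _ c (hf m n d)

/-- The bound `κ'` for which multiplication by the corner monomial `X ^ i * (Y * (σ * t) ^ b) ^ j`
carries the window of `κ'` onto the window of `κ`. -/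
def cornerShift (i j : ℤ) (κ : ℤ → ℤ) (D : ℤ) : ℤ := κ (D - i * a + j * b) - j * b

/-- The monomial `X ^ i * (Y * (σ * t) ^ b) ^ j`; `x₀` and `y_b` map to monomials of this form. -/
def cornerMonomial (i j : ℤ) : LaurentRing E := single (i, j, j * b) ((σ ^ (j * b) : Eˣ) : E)

variable {F a b σ} {κ κ₁ κ₂ : ℤ → ℤ} {f : LaurentRing E}

lemma windowSubmodule_antitone : Antitone (windowSubmodule F a b σ) :=
  fun _ _ h _ hf m n d => zpowSpan_mono (h _) le_rfl (hf m n d)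

lemma windowSubmodule_sup :
    windowSubmodule F a b σ (κ₁ ⊔ κ₂) =
      windowSubmodule F a b σ κ₁ ⊓ windowSubmodule F a b σ κ₂ := by
  refine le_antisymm (le_inf (windowSubmodule_antitone le_sup_left)
    (windowSubmodule_antitone le_sup_right)) fun f ⟨h₁, h₂⟩ m n d => ?_
  rcases le_total (κ₁ (d - m * a)) (κ₂ (d - m * a)) with h | h
  · simpa [h] using h₂ m n d
  · simpa [h] using h₁ m n d

lemma single_mem_windowSubmodule {m n d : ℤ} {e : E}
    (he : e ∈ zpowSpan F σ (κ (d - m * a)) (min (n * b) d)) :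
    single (m, n, d) e ∈ windowSubmodule F a b σ κ := by
  intro m' n' d'
  rw [AddMonoidAlgebra.coeff_single, Finsupp.single_apply]
  split_ifs with h
  · cases h
    exact he
  · exact zero_mem _

lemma mem_of_forall_single_coeff_mem {N : Submodule F (LaurentRing E)}
    (h : ∀ m n d, single (m, n, d) (f.coeff (m, n, d)) ∈ N) : f ∈ N := by
  rw [← AddMonoidAlgebra.sum_coeff_single f]
  exact sum_mem fun p _ => h p.1 p.2.1 p.2.2

lemma windowSubmodule_inf :
    windowSubmodule F a b σ (κ₁ ⊓ κ₂) =
      windowSubmodule F a b σ κ₁ ⊔ windowSubmodule F a b σ κ₂ := by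
  refine le_antisymm (fun f hf => mem_of_forall_single_coeff_mem fun m n d => ?_)
    (sup_le (windowSubmodule_antitone inf_le_left) (windowSubmodule_antitone inf_le_right))
  have hfc := hf m n d
  rcases le_total (κ₁ (d - m * a)) (κ₂ (d - m * a)) with h | h
  · rw [Pi.inf_apply, inf_eq_left.2 h] at hfc
    exact Submodule.mem_sup_left (single_mem_windowSubmodule hfc)
  · rw [Pi.inf_apply, inf_eq_right.2 h] at hfc
    exact Submodule.mem_sup_right (single_mem_windowSubmodule hfc)

lemma cornerMonomial_mul_mem_windowSubmodule_iff {i j : ℤ} :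
    cornerMonomial b σ i j * f ∈ windowSubmodule F a b σ κ ↔
      f ∈ windowSubmodule F a b σ (cornerShift a b i j κ) := by
  have hcoeff (m n d : ℤ) :
      (cornerMonomial b σ i j * f).coeff (m, n, d) ∈
          zpowSpan F σ (κ (d - m * a)) (min (n * b) d) ↔
        f.coeff (m - i, n - j, d - j * b) ∈ zpowSpan F σ
          (cornerShift a b i j κ (d - j * b - (m - i) * a)) (min ((n - j) * b) (d - j * b)) := by
    rw [cornerMonomial, coeff_single_mul, zpow_mul_mem_zpowSpan_iff, cornerShift,
      ← min_sub_sub_right, ← sub_mul,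
      show d - j * b - (m - i) * a - i * a + j * b = d - m * a by ring]
  refine ⟨fun h m n d => ?_, fun h m n d => (hcoeff m n d).2 (h _ _ _)⟩
  simpa using (hcoeff (m + i) (n + j) (d + j * b)).1 (h _ _ _)

lemma cornerMonomial_mul_cornerMonomial_neg (i j : ℤ) :
    cornerMonomial b σ i j * cornerMonomial b σ (-i) (-j) = 1 := by
  simp [cornerMonomial, AddMonoidAlgebra.single_mul_single, AddMonoidAlgebra.one_def,
    ← Prod.zero_eq_mk]

lemma coeff_eq_zero_of_neg_left (ha : 0 < a) (hf : f ∈ windowSubmodule F a b σ (max 0))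
    {m : ℤ} (hm : m < 0) (n d : ℤ) : f.coeff (m, n, d) = 0 := by
  have hma : m * a < 0 := mul_neg_of_neg_of_pos hm (by exact_mod_cast ha)
  have hfc := hf m n d
  rwa [zpowSpan_eq_bot (by omega), Submodule.mem_bot] at hfc

lemma coeff_eq_zero_of_neg_right (hb : 0 < b) (hf : f ∈ windowSubmodule F a b σ (max 0))
    {n : ℤ} (hn : n < 0) (m d : ℤ) : f.coeff (m, n, d) = 0 := by
  have hnb : n * b < 0 := mul_neg_of_neg_of_pos hn (by exact_mod_cast hb)
  have hfc := hf m n d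
  rwa [zpowSpan_eq_bot (by omega), Submodule.mem_bot] at hfc

lemma coeff_sub_coeff_mem_zpowSpan
    (h : (single (1, 0, (a : ℤ)) 1 - single (0, 1, 0) 1) * f ∈ windowSubmodule F a b σ κ)
    (m n d : ℤ) : f.coeff (m - 1, n, d - a) - f.coeff (m, n - 1, d) ∈
      zpowSpan F σ (κ (d - m * a)) (min (n * b) d) := by
  simpa only [sub_mul, AddMonoidAlgebra.coeff_sub, Finsupp.sub_apply, coeff_single_mul, one_mul,
    sub_zero] using h m n d

-- The recursion `(m, n, d) ↦ (m - 1, n + 1, d - a)` preserves both `d - m * a` and `d ≤ n * b`,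
-- so it never loosens the bounds, and it ends where `m < 0`.
lemma coeff_mem_zpowSpan_of_le_mul (ha : 0 < a) (hf : f ∈ windowSubmodule F a b σ (max 0))
    (h : (single (1, 0, (a : ℤ)) 1 - single (0, 1, 0) 1) * f ∈ windowSubmodule F a b σ κ)
    {m n d : ℤ} (hd : d ≤ n * b) :
    f.coeff (m, n, d) ∈ zpowSpan F σ (κ (d - m * a)) (min (n * b) d) := by
  obtain ⟨N, hN⟩ : ∃ N : ℕ, m < N := ⟨(m + 1).toNat, by omega⟩
  induction N generalizing m n d with
  | zero => simp [coeff_eq_zero_of_neg_left ha hf hN]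
  | succ N ih =>
    have hnb : (n + 1) * (b : ℤ) = n * b + b := by ring
    have hD : d - a - (m - 1) * a = d - m * a := by ring
    have hprev := ih (m := m - 1) (n := n + 1) (d := d - a) (by omega) (by omega)
    have hstep := coeff_sub_coeff_mem_zpowSpan h m (n + 1) d
    rw [hD] at hprev
    rw [add_sub_cancel_right] at hstep
    simpa using sub_mem (zpowSpan_mono le_rfl (by omega) hprev)
      (zpowSpan_mono (q' := min (n * b) d) le_rfl (by omega) hstep)

lemma coeff_mem_zpowSpan_of_mul_le (hb : 0 < b) (hf : f ∈ windowSubmodule F a b σ (max 0))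
    (h : (single (1, 0, (a : ℤ)) 1 - single (0, 1, 0) 1) * f ∈ windowSubmodule F a b σ κ)
    {m n d : ℤ} (hd : n * b ≤ d) :
    f.coeff (m, n, d) ∈ zpowSpan F σ (κ (d - m * a)) (min (n * b) d) := by
  obtain ⟨N, hN⟩ : ∃ N : ℕ, n < N := ⟨(n + 1).toNat, by omega⟩
  induction N generalizing m n d with
  | zero => simp [coeff_eq_zero_of_neg_right hb hf hN]
  | succ N ih =>
    have hnb : (n - 1) * (b : ℤ) = n * b - b := by ring
    have hD : d + a - (m + 1) * a = d - m * a := by ring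
    have hprev := ih (m := m + 1) (n := n - 1) (d := d + a) (by omega) (by omega)
    have hstep := coeff_sub_coeff_mem_zpowSpan h (m + 1) n (d + a)
    rw [hD] at hprev hstep
    rw [add_sub_cancel_right, add_sub_cancel_right] at hstep
    simpa using add_mem (zpowSpan_mono le_rfl (by omega) hprev)
      (zpowSpan_mono (q' := min (n * b) d) le_rfl (by omega) hstep)

lemma mem_windowSubmodule_of_sub_mul_mem (ha : 0 < a) (hb : 0 < b)
    (hf : f ∈ windowSubmodule F a b σ (max 0))
    (h : (single (1, 0, (a : ℤ)) 1 - single (0, 1, 0) 1) * f ∈ windowSubmodule F a b σ κ) :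
    f ∈ windowSubmodule F a b σ κ := fun _ n d =>
  (le_total d (n * b)).elim (coeff_mem_zpowSpan_of_le_mul ha hf h)
    (coeff_mem_zpowSpan_of_mul_le hb hf h)

lemma mem_windowSubmodule_of_cornerMonomial_mul_mem
    (hf : f ∈ windowSubmodule F a b σ (max 0))
    (h : cornerMonomial b σ 0 1 * f ∈ windowSubmodule F a b σ (cornerShift a b (-1) 0 (max 0))) :
    f ∈ windowSubmodule F a b σ (cornerShift a b (-1) 0 (max 0)) := by
  have hmem : f ∈ windowSubmodule F a b σ
      (max 0 ⊔ cornerShift a b 0 1 (cornerShift a b (-1) 0 (max 0))) := by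
    rw [windowSubmodule_sup]
    exact ⟨hf, cornerMonomial_mul_mem_windowSubmodule_iff.1 h⟩
  refine windowSubmodule_antitone (fun D => ?_) hmem
  simp only [cornerShift, Pi.sup_apply]
  omega

end Window

section RegularSequence

lemma isRegular_of_dvd_of_mem_span_pair {S : Type*} [CommRing S] {x z y : S}
    (hx : ∀ s, x * s = 0 → s = 0) (hz : ∀ s, x ∣ z * s → x ∣ s) (hy : ∀ s, x ∣ y * s → x ∣ s)
    (hzy : ∀ s, z * s ∈ Ideal.span {x, y} → s ∈ Ideal.span {x, y})
    (hne : Ideal.span {x, z, y} ≠ ⊤) : RingTheory.Sequence.IsRegular S [x, z, y] := by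
  -- `y` and `z` are interchangeable modulo `x`: if `y s = g x + k z` then `k = u x + v y` by
  -- `hzy`, so `y (s - v z)` is a multiple of `x`.
  have hyz (s : S) (hs : y * s ∈ Ideal.span {x, z}) : s ∈ Ideal.span {x, z} := by
    obtain ⟨g, k, hgk⟩ := Ideal.mem_span_pair.1 hs
    obtain ⟨u, v, rfl⟩ := Ideal.mem_span_pair.1
      (hzy k (Ideal.mem_span_pair.2 ⟨-g, s, by linear_combination -hgk⟩))
    obtain ⟨w, hw⟩ := hy (s - v * z) ⟨g + u * z, by linear_combination -hgk⟩
    exact Ideal.mem_span_pair.2 ⟨w, v, by linear_combination -hw⟩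
  refine ⟨⟨fun i hi => ?_⟩, ?_⟩
  · rw [isSMulRegular_quotient_iff_mem_of_smul_mem]
    simp only [List.length_cons, List.length_nil] at hi
    interval_cases i
    · simpa using hx
    · simpa [Ideal.mem_span_singleton] using hz
    · simpa [← Ideal.span_insert] using hyz
  · simpa [← Ideal.span_insert] using hne.symm

open AddMonoidAlgebra (single)

variable {F a b} {E : Type*} [CommRing E] [Algebra F E] {σ : Eˣ} {S : Type*} [CommRing S]
  {φ : S →+* LaurentRing E}

lemma dvd_iff_apply_mem_windowSubmodule (hφ : Function.Injective φ)
    (hrange : ∀ f, f ∈ φ.range ↔ f ∈ windowSubmodule F a b σ (max 0)) {u : S} {i j : ℤ}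
    (hu : φ u = cornerMonomial b σ i j) (s : S) :
    u ∣ s ↔ φ s ∈ windowSubmodule F a b σ (cornerShift a b (-i) (-j) (max 0)) := by
  rw [← cornerMonomial_mul_mem_windowSubmodule_iff, ← hrange]
  constructor
  · rintro ⟨g, rfl⟩
    refine ⟨g, ?_⟩
    rw [map_mul, hu, ← mul_assoc, mul_comm (cornerMonomial b σ (-i) (-j)),
      cornerMonomial_mul_cornerMonomial_neg, one_mul]
  · rintro ⟨g, hg⟩
    refine ⟨g, hφ ?_⟩
    rw [map_mul, hu, hg, ← mul_assoc, cornerMonomial_mul_cornerMonomial_neg, one_mul]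

lemma mem_span_pair_iff_apply_mem_windowSubmodule (hφ : Function.Injective φ)
    (hrange : ∀ f, f ∈ φ.range ↔ f ∈ windowSubmodule F a b σ (max 0)) {x y : S}
    (hx : φ x = cornerMonomial b σ 1 0) (hy : φ y = cornerMonomial b σ 0 1) (s : S) :
    s ∈ Ideal.span {x, y} ↔ φ s ∈ windowSubmodule F a b σ
      (cornerShift a b (-1) 0 (max 0) ⊓ cornerShift a b 0 (-1) (max 0)) := by
  have hdvdx := dvd_iff_apply_mem_windowSubmodule hφ hrange hx
  have hdvdy := dvd_iff_apply_mem_windowSubmodule hφ hrange hy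
  rw [neg_zero] at hdvdx hdvdy
  rw [Ideal.span_insert, Submodule.mem_sup, windowSubmodule_inf, Submodule.mem_sup]
  simp only [Ideal.mem_span_singleton]
  constructor
  · rintro ⟨s₁, h₁, s₂, h₂, rfl⟩
    exact ⟨φ s₁, (hdvdx s₁).1 h₁, φ s₂, (hdvdy s₂).1 h₂, (map_add φ _ _).symm⟩
  · have hle (i j : ℤ) (hij : i = -1 ∧ j = 0 ∨ i = 0 ∧ j = -1) :
        windowSubmodule F a b σ (cornerShift a b i j (max 0)) ≤
          windowSubmodule F a b σ (max 0) := by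
      refine windowSubmodule_antitone fun D => ?_
      rcases hij with ⟨rfl, rfl⟩ | ⟨rfl, rfl⟩ <;> simp only [cornerShift] <;> omega
    rintro ⟨f₁, h₁, f₂, h₂, hs⟩
    obtain ⟨s₁, rfl⟩ := (hrange f₁).2 (hle _ _ (.inl ⟨rfl, rfl⟩) h₁)
    obtain ⟨s₂, rfl⟩ := (hrange f₂).2 (hle _ _ (.inr ⟨rfl, rfl⟩) h₂)
    exact ⟨s₁, (hdvdx s₁).2 h₁, s₂, (hdvdy s₂).2 h₂, hφ (by rw [map_add, hs])⟩

theorem isRegular_of_range_eq_windowSubmodule (ha : 0 < a) (hb : 0 < b)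
    (hφ : Function.Injective φ)
    (hrange : ∀ f, f ∈ φ.range ↔ f ∈ windowSubmodule F a b σ (max 0)) {x z y : S}
    (hx : φ x = cornerMonomial b σ 1 0) (hz : φ z = single (1, 0, (a : ℤ)) 1 - single (0, 1, 0) 1)
    (hy : φ y = cornerMonomial b σ 0 1) (hne : Ideal.span {x, z, y} ≠ ⊤) :
    RingTheory.Sequence.IsRegular S [x, z, y] := by
  have hmem (s : S) : φ s ∈ windowSubmodule F a b σ (max 0) := (hrange _).1 ⟨s, rfl⟩
  have hdvd := dvd_iff_apply_mem_windowSubmodule hφ hrange hx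
  have hspan := mem_span_pair_iff_apply_mem_windowSubmodule hφ hrange hx hy
  rw [neg_zero] at hdvd
  refine isRegular_of_dvd_of_mem_span_pair (fun s hs => hφ ?_) (fun s hs => ?_) (fun s hs => ?_)
    (fun s hs => ?_) hne
  · have hunit : IsUnit (φ x) := by
      rw [hx]
      exact IsUnit.of_mul_eq_one _ (cornerMonomial_mul_cornerMonomial_neg 1 0)
    rw [map_zero, ← hunit.mul_right_eq_zero, ← map_mul, hs, map_zero]
  · rw [hdvd, map_mul, hz] at hs
    exact (hdvd s).2 (mem_windowSubmodule_of_sub_mul_mem ha hb (hmem s) hs)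
  · rw [hdvd, map_mul, hy] at hs
    exact (hdvd s).2 (mem_windowSubmodule_of_cornerMonomial_mul_mem (hmem s) hs)
  · rw [hspan, map_mul, hz] at hs
    exact (hspan s).2 (mem_windowSubmodule_of_sub_mul_mem ha hb (hmem s) hs)

end RegularSequence

section GreedyProd

variable {a b} {S : Type*} [CommRing S]

/-- The `2 × 2` minors of the matrix with rows `(x₀,…,x_{a-1})` and `(x₁,…,x_a)` vanish at `x`. -/
def MinorsVanish (x : Fin (a + 1) → S) : Prop :=
  ∀ i j : Fin a, x i.castSucc * x j.succ = x j.castSucc * x i.succ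

/-- The product of `m` entries of `x` whose indices add up to `k`, taking the largest possible
index first. Only the values with `k ≤ m * a` are meaningful. -/
def greedyProd (x : Fin (a + 1) → S) : ℕ → ℕ → S
  | 0, _ => 1
  | m + 1, k => x ⟨min k a, by omega⟩ * greedyProd x m (k - min k a)

lemma minorsVanish_mul_pow (u t : S) :
    MinorsVanish fun i : Fin (a + 1) => u * t ^ (i : ℕ) := by
  intro i j
  simp only [Fin.val_castSucc, Fin.val_succ]
  ring

lemma greedyProd_mul_pow (u t : S) {m k : ℕ} (hk : k ≤ m * a) :
    greedyProd (fun i : Fin (a + 1) => u * t ^ (i : ℕ)) m k = u ^ m * t ^ k := by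
  induction m generalizing k with
  | zero => simp_all [greedyProd]
  | succ m ih =>
    rw [Nat.succ_mul] at hk
    obtain ⟨r, hr⟩ := Nat.exists_eq_add_of_le (min_le_left k a)
    rw [greedyProd, ih (by omega), show k - min k a = r by omega]
    nth_rw 3 [hr]
    ring

lemma map_greedyProd {R G : Type*} [CommRing R] [FunLike G S R] [MonoidHomClass G S R] (φ : G)
    (x : Fin (a + 1) → S) (m k : ℕ) : φ (greedyProd x m k) = greedyProd (φ ∘ x) m k := by
  induction m generalizing k with
  | zero => simp [greedyProd]
  | succ m ih => simp [greedyProd, ih]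

namespace MinorsVanish

variable {x : Fin (a + 1) → S} (hx : MinorsVanish x)
include hx

lemma mul_eq_mul_add_sub {r : ℕ} {i j : Fin (a + 1)} (hi : i + r ≤ a) (hj : r ≤ j) :
    x i * x j = x ⟨i + r, by omega⟩ * x ⟨j - r, by omega⟩ := by
  induction r with
  | zero => rfl
  | succ r ih =>
    have hstep := hx ⟨i + r, by omega⟩ ⟨j - (r + 1), by omega⟩
    simp only [Fin.castSucc_mk, Fin.succ_mk, show (j : ℕ) - (r + 1) + 1 = j - r by omega] at hstep
    rw [ih (by omega) (by omega), hstep, mul_comm]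
    rfl

lemma mul_eq_mul_of_add_eq {i j k l : Fin (a + 1)} (h : (i : ℕ) + j = k + l) :
    x i * x j = x k * x l := by
  wlog hik : (i : ℕ) ≤ k generalizing i j k l
  · exact (this h.symm (by omega)).symm
  rw [hx.mul_eq_mul_add_sub (r := k - i) (by omega) (by omega)]
  congr 2 <;> exact Fin.ext (by simp only; omega)

lemma mul_greedyProd {m k : ℕ} (hk : k ≤ m * a) (i : Fin (a + 1)) :
    x i * greedyProd x m k = greedyProd x (m + 1) (k + i) := by
  induction m generalizing k i with
  | zero =>
    obtain rfl : k = 0 := by simpa using hk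
    simp [greedyProd, min_eq_left i.is_le]
  | succ m ih =>
    have hi := i.is_le
    rw [Nat.succ_mul] at hk
    rw [greedyProd, greedyProd, ← mul_assoc,
      hx.mul_eq_mul_of_add_eq (k := ⟨min (k + i) a, by omega⟩)
        (l := ⟨i + min k a - min (k + i) a, by omega⟩) (by simp only; omega),
      mul_assoc, ih (by omega)]
    congr 2
    simp only
    omega

lemma exists_greedyProd_add_eq_mul (ha : 2 ≤ a) {m k : ℕ} (hk : k + 2 ≤ m * a) :
    ∃ i z, ∃ hi : i + 2 ≤ a, ∀ r (hr : r ≤ 2),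
      greedyProd x m (k + r) = x ⟨i + r, by omega⟩ * z := by
  obtain _ | m := m
  · omega
  rw [Nat.succ_mul] at hk
  refine ⟨min k (a - 2), greedyProd x m (k - min k (a - 2)), by omega, fun r hr => ?_⟩
  rw [hx.mul_greedyProd (by omega)]
  congr 1
  simp only
  omega

end MinorsVanish

end GreedyProd

section ScrollPoint

/-- The ideal `I_e = I₂(MX) + I₂(MY) + J_e`. -/
def scrollIdeal (e₁ e₂ : F) : Ideal (KPoly F a b) :=
  I2MX F a b + I2MY F a b + Je F a b e₁ e₂

variable {F a b} {S : Type*} [CommRing S] [Algebra F S]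

/-- The point `(x, y)` with coordinates in `S` is a zero of the ideal `I_e`. -/
structure IsScrollPoint (e₁ e₂ : F) (x : Fin (a + 1) → S) (y : Fin (b + 1) → S) : Prop where
  minors_left : MinorsVanish x
  minors_right : MinorsVanish y
  bilinear (i j : ℕ) (hi : i + 2 ≤ a) (hj : j + 2 ≤ b) :
    x ⟨i + 2, by omega⟩ * y ⟨j, by omega⟩ - e₁ • (x ⟨i + 1, by omega⟩ * y ⟨j + 1, by omega⟩)
      + e₂ • (x ⟨i, by omega⟩ * y ⟨j + 2, by omega⟩) = 0

lemma isScrollPoint_iff_le_ker {e₁ e₂ : F} {x : Fin (a + 1) → S} {y : Fin (b + 1) → S} :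
    IsScrollPoint e₁ e₂ x y ↔ scrollIdeal F a b e₁ e₂ ≤
      RingHom.ker (aeval (Sum.elim x y) : KPoly F a b →ₐ[F] S) := by
  simp only [scrollIdeal, Submodule.add_eq_sup, sup_le_iff, I2MX, I2MY, Je,
    Ideal.span_le, Set.subset_def, Set.mem_ofPred_eq, SetLike.mem_coe, RingHom.mem_ker]
  constructor
  · rintro ⟨hx, hy, hxy⟩
    refine ⟨⟨?_, ?_⟩, ?_⟩
    · rintro _ ⟨i, j, rfl⟩
      simpa [xv, sub_eq_zero] using hx i j
    · rintro _ ⟨i, j, rfl⟩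
      simpa [yv, sub_eq_zero] using hy i j
    · rintro _ ⟨i, j, hi, hj, rfl⟩
      simpa [xv, yv, Algebra.smul_def] using hxy i j hi hj
  · rintro ⟨⟨hx, hy⟩, hxy⟩
    refine ⟨fun i j => ?_, fun i j => ?_, fun i j hi hj => ?_⟩
    · simpa [xv, sub_eq_zero] using hx _ ⟨i, j, rfl⟩
    · simpa [yv, sub_eq_zero] using hy _ ⟨i, j, rfl⟩
    · simpa [xv, yv, Algebra.smul_def] using hxy _ ⟨i, j, hi, hj, rfl⟩

lemma aeval_sumElim_mk (I : Ideal (KPoly F a b)) :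
    aeval (Sum.elim (Ideal.Quotient.mk I ∘ xv F a b) (Ideal.Quotient.mk I ∘ yv F a b)) =
      Ideal.Quotient.mkₐ F I := by
  refine MvPolynomial.algHom_ext fun v => ?_
  rcases v with i | j <;> simp [xv, yv]

lemma isScrollPoint_mk (e₁ e₂ : F) :
    IsScrollPoint e₁ e₂ (Ideal.Quotient.mk (scrollIdeal F a b e₁ e₂) ∘ xv F a b)
      (Ideal.Quotient.mk (scrollIdeal F a b e₁ e₂) ∘ yv F a b) := by
  rw [isScrollPoint_iff_le_ker, aeval_sumElim_mk]
  exact (Ideal.Quotient.mkₐ_ker F _).ge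

lemma isScrollPoint_mul_pow {e₁ e₂ : F} {s : S} (hs : 1 - e₁ • s + e₂ • (s * s) = 0) (u v t : S) :
    IsScrollPoint e₁ e₂ (fun i : Fin (a + 1) => u * t ^ (i : ℕ))
      (fun j : Fin (b + 1) => v * (s * t) ^ (j : ℕ)) where
  minors_left := minorsVanish_mul_pow u t
  minors_right := minorsVanish_mul_pow v (s * t)
  bilinear i j _ _ := by
    simp only [Algebra.smul_def] at hs ⊢
    linear_combination u * v * t ^ (i + 2) * (s * t) ^ j * hs

lemma isScrollPoint_zero (e₁ e₂ : F) :
    IsScrollPoint e₁ e₂ (0 : Fin (a + 1) → S) (0 : Fin (b + 1) → S) := by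
  constructor <;> simp [MinorsVanish]

lemma IsScrollPoint.greedyProd_bilinear {e₁ e₂ : F} {x : Fin (a + 1) → S} {y : Fin (b + 1) → S}
    (h : IsScrollPoint e₁ e₂ x y) (ha : 2 ≤ a) (hb : 2 ≤ b) {m n k l : ℕ} (hk : k + 2 ≤ m * a)
    (hl : l + 2 ≤ n * b) :
    greedyProd x m (k + 2) * greedyProd y n l
      - e₁ • (greedyProd x m (k + 1) * greedyProd y n (l + 1))
      + e₂ • (greedyProd x m k * greedyProd y n (l + 2)) = 0 := by
  obtain ⟨i, z, hi, hz⟩ := h.minors_left.exists_greedyProd_add_eq_mul ha hk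
  obtain ⟨j, w, hj, hw⟩ := h.minors_right.exists_greedyProd_add_eq_mul hb hl
  have hz₀ := hz 0 (by omega)
  have hw₀ := hw 0 (by omega)
  have hxy := h.bilinear i j hi hj
  simp only [add_zero] at hz₀ hw₀
  rw [hz 2 le_rfl, hz 1 (by omega), hz₀, hw 2 le_rfl, hw 1 (by omega), hw₀]
  simp only [Algebra.smul_def] at hxy ⊢
  linear_combination z * w * hxy

lemma mul_mem_span_greedyProd {x : Fin (a + 1) → S} {y : Fin (b + 1) → S}
    (hx : MinorsVanish x) (hy : MinorsVanish y) {s : S} (hs : s ∈ Submodule.span F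
      {s | ∃ m n k l, k ≤ m * a ∧ l ≤ n * b ∧ s = greedyProd x m k * greedyProd y n l})
    (v : Fin (a + 1) ⊕ Fin (b + 1)) : s * Sum.elim x y v ∈ Submodule.span F
      {s | ∃ m n k l, k ≤ m * a ∧ l ≤ n * b ∧ s = greedyProd x m k * greedyProd y n l} := by
  induction hs using Submodule.span_induction with
  | zero => simp
  | add s s' _ _ ih ih' => simpa [add_mul] using add_mem ih ih'
  | smul c s _ ih => simpa using Submodule.smul_mem _ c ih
  | mem s hs =>
    obtain ⟨m, n, k, l, hk, hl, rfl⟩ := hs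
    refine Submodule.subset_span ?_
    rcases v with i | j
    · have hi := i.is_le
      refine ⟨m + 1, n, k + i, l, by rw [Nat.succ_mul]; omega, hl, ?_⟩
      rw [← hx.mul_greedyProd hk i, Sum.elim_inl]
      ring
    · have hj := j.is_le
      refine ⟨m, n + 1, k, l + j, hk, by rw [Nat.succ_mul]; omega, ?_⟩
      rw [← hy.mul_greedyProd hl j, Sum.elim_inr]
      ring

lemma range_aeval_eq_span_greedyProd {x : Fin (a + 1) → S} {y : Fin (b + 1) → S}
    (hx : MinorsVanish x) (hy : MinorsVanish y) :
    (aeval (Sum.elim x y) : KPoly F a b →ₐ[F] S).range.toSubmodule = Submodule.span F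
      {s | ∃ m n k l, k ≤ m * a ∧ l ≤ n * b ∧ s = greedyProd x m k * greedyProd y n l} := by
  refine le_antisymm ?_ (Submodule.span_le.2 ?_)
  · rintro _ ⟨p, rfl⟩
    induction p using MvPolynomial.induction_on with
    | C c =>
      rw [AlgHom.toRingHom_eq_coe, RingHom.coe_coe, aeval_C, Algebra.algebraMap_eq_smul_one]
      exact Submodule.smul_mem _ c
        (Submodule.subset_span ⟨0, 0, 0, 0, by simp, by simp, by simp [greedyProd]⟩)
    | add p q hp hq => simpa using add_mem hp hq
    | mul_X p v hp => simpa using mul_mem_span_greedyProd hx hy hp v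
  · rintro _ ⟨m, n, k, l, -, -, rfl⟩
    have hxv : aeval (Sum.elim x y) ∘ xv F a b = x := by ext i; simp [xv]
    have hyv : aeval (Sum.elim x y) ∘ yv F a b = y := by ext j; simp [yv]
    refine (AlgHom.mem_range _).2 ⟨greedyProd (xv F a b) m k * greedyProd (yv F a b) n l, ?_⟩
    rw [map_mul, map_greedyProd, map_greedyProd, hxv, hyv]

end ScrollPoint

section ReciprocalRoot

variable {F}

open scoped QuadraticAlgebra

/-- The algebra `F[ρ] / (1 - e₁ * ρ + e₂ * ρ ^ 2)`. Dividing the relation by `e₂` puts it in the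
normal form of `QuadraticAlgebra`. -/
abbrev ReciprocalRootAlgebra (e₁ : F) (e₂ : Fˣ) : Type _ :=
  QuadraticAlgebra F (-(↑e₂⁻¹ : F)) (e₁ * ↑e₂⁻¹)

/-- The generator `ρ` of `F[ρ] / (1 - e₁ * ρ + e₂ * ρ ^ 2)`, the reciprocal of the root
`e₁ - e₂ * ρ` of `T ^ 2 - e₁ * T + e₂`. -/
def reciprocalRoot (e₁ : F) (e₂ : Fˣ) : (ReciprocalRootAlgebra e₁ e₂)ˣ where
  val := ⟨0, 1⟩
  inv := ⟨e₁, -e₂⟩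
  val_inv := by ext <;> simp [mul_assoc]
  inv_val := by ext <;> simp [mul_assoc]

lemma reciprocalRoot_relation (e₁ : F) (e₂ : Fˣ) :
    (1 : ReciprocalRootAlgebra e₁ e₂) - e₁ • (reciprocalRoot e₁ e₂ : ReciprocalRootAlgebra e₁ e₂)
      + (e₂ : F) • (↑(reciprocalRoot e₁ e₂) * ↑(reciprocalRoot e₁ e₂)) = 0 := by
  ext <;> simp [reciprocalRoot, mul_left_comm]

lemma exists_linearMap_reciprocalRoot_zpow {V : Type*} [AddCommGroup V] [Module F V] (e₁ : F)
    (e₂ : Fˣ) {lo hi : ℤ} {c : ℤ → V}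
    (hc : ∀ l, lo ≤ l → l + 2 ≤ hi → c l - e₁ • c (l + 1) + (e₂ : F) • c (l + 2) = 0) :
    ∃ ψ : ReciprocalRootAlgebra e₁ e₂ →ₗ[F] V, ∀ l, lo ≤ l → l ≤ hi →
      ψ ↑(reciprocalRoot e₁ e₂ ^ l) = c l := by
  let ψ : ReciprocalRootAlgebra e₁ e₂ →ₗ[F] V :=
    ((QuadraticAlgebra.reₗ _ _).smulRight (c lo) +
        (QuadraticAlgebra.imₗ _ _).smulRight (c (lo + 1))) ∘ₗ
      LinearMap.mulLeft F ↑(reciprocalRoot e₁ e₂ ^ (-lo))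
  have hlo : ψ ↑(reciprocalRoot e₁ e₂ ^ lo) = c lo := by
    simp [ψ, ← Units.val_mul]
  have hlo' : ψ ↑(reciprocalRoot e₁ e₂ ^ (lo + 1)) = c (lo + 1) := by
    have hroot : (↑(reciprocalRoot e₁ e₂) : ReciprocalRootAlgebra e₁ e₂) = ⟨0, 1⟩ := rfl
    simp [ψ, ← Units.val_mul, zpow_add, hroot]
  have hrec (l : ℤ) : ψ ↑(reciprocalRoot e₁ e₂ ^ l) - e₁ • ψ ↑(reciprocalRoot e₁ e₂ ^ (l + 1))
      + (e₂ : F) • ψ ↑(reciprocalRoot e₁ e₂ ^ (l + 2)) = 0 := by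
    rw [← map_smul, ← map_smul, ← map_sub, ← map_add, ← map_zero ψ]
    congr 1
    have h := reciprocalRoot_relation e₁ e₂
    simp only [zpow_add, Units.val_mul, zpow_one, zpow_two, Algebra.smul_def] at h ⊢
    linear_combination ↑(reciprocalRoot e₁ e₂ ^ l) * h
  have hpair (r : ℕ) : (lo + r ≤ hi → ψ ↑(reciprocalRoot e₁ e₂ ^ (lo + r)) = c (lo + r)) ∧
      (lo + r + 1 ≤ hi → ψ ↑(reciprocalRoot e₁ e₂ ^ (lo + r + 1)) = c (lo + r + 1)) := by
    induction r with
    | zero => simp [hlo, hlo']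
    | succ r ih =>
      push_cast
      rw [← add_assoc]
      refine ⟨ih.2, fun h => ?_⟩
      have hstep := (hrec (lo + r)).trans (hc (lo + r) (by omega) (by omega)).symm
      rw [ih.1 (by omega), ih.2 (by omega), add_right_inj] at hstep
      simpa [add_assoc] using e₂.isUnit.smul_left_cancel.1 hstep
  refine ⟨ψ, fun l hl hl' => ?_⟩
  obtain ⟨r, rfl⟩ := Int.le.dest hl
  exact (hpair r).1 hl'

end ReciprocalRoot

section Parametrization

open AddMonoidAlgebra (single)

variable {F a b} {E : Type*} [CommRing E] [Algebra F E]

/-- The coordinates `x_i = X * t ^ i` of the parametrization of the zero set of `I_e`. -/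
def paramX (E : Type*) [CommRing E] (i : Fin (a + 1)) : LaurentRing E :=
  single (1, 0, 0) 1 * single (0, 0, 1) 1 ^ (i : ℕ)

/-- The coordinates `y_j = Y * (σ * t) ^ j` of the parametrization of the zero set of `I_e`. -/
def paramY (σ : Eˣ) (j : Fin (b + 1)) : LaurentRing E :=
  single (0, 1, 0) 1 * (single 0 (σ : E) * single (0, 0, 1) 1) ^ (j : ℕ)

lemma paramX_eq_single (i : Fin (a + 1)) : paramX E i = single (1, 0, ((i : ℕ) : ℤ)) 1 := by
  simp [paramX, AddMonoidAlgebra.single_pow, AddMonoidAlgebra.single_mul_single]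

lemma paramY_eq_single (σ : Eˣ) (j : Fin (b + 1)) :
    paramY σ j = single (0, 1, ((j : ℕ) : ℤ)) ((σ : E) ^ (j : ℕ)) := by
  simp [paramY, AddMonoidAlgebra.single_pow, AddMonoidAlgebra.single_mul_single]

lemma isScrollPoint_param {e₁ e₂ : F} {σ : Eˣ}
    (hσ : 1 - e₁ • (σ : E) + e₂ • ((σ : E) * σ) = 0) :
    IsScrollPoint e₁ e₂ (paramX E : Fin (a + 1) → _) (paramY σ : Fin (b + 1) → _) := by
  refine isScrollPoint_mul_pow ?_ _ _ _
  rw [AddMonoidAlgebra.single_mul_single, AddMonoidAlgebra.smul_single,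
    AddMonoidAlgebra.smul_single, AddMonoidAlgebra.one_def, add_zero,
    ← AddMonoidAlgebra.single_sub, ← AddMonoidAlgebra.single_add, hσ, AddMonoidAlgebra.single_zero]

lemma greedyProd_paramX_mul_greedyProd_paramY (σ : Eˣ) {m n k l : ℕ} (hk : k ≤ m * a)
    (hl : l ≤ n * b) :
    greedyProd (paramX E : Fin (a + 1) → _) m k * greedyProd (paramY σ : Fin (b + 1) → _) n l =
      single ((m : ℤ), (n : ℤ), (k : ℤ) + l) ((σ ^ (l : ℤ) : Eˣ) : E) := by
  unfold paramX paramY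
  rw [greedyProd_mul_pow _ _ hk, greedyProd_mul_pow _ _ hl]
  simp [AddMonoidAlgebra.single_pow, AddMonoidAlgebra.single_mul_single]

lemma range_aeval_param (ha : 0 < a) (hb : 0 < b) (σ : Eˣ) :
    (aeval (Sum.elim (paramX E) (paramY σ)) : KPoly F a b →ₐ[F] _).range.toSubmodule =
      windowSubmodule F a b σ (max 0) := by
  rw [range_aeval_eq_span_greedyProd (x := paramX E) (y := paramY σ) (minorsVanish_mul_pow _ _)
    (minorsVanish_mul_pow _ _)]
  refine le_antisymm (Submodule.span_le.2 ?_) fun f hf =>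
    mem_of_forall_single_coeff_mem fun m n d => ?_
  · rintro _ ⟨m, n, k, l, hk, hl, rfl⟩
    rw [greedyProd_paramX_mul_greedyProd_paramY σ hk hl]
    zify at hk hl
    exact single_mem_windowSubmodule (Submodule.subset_span ⟨l, ⟨by omega, by omega⟩, rfl⟩)
  · by_cases hm : m < 0
    · simp [coeff_eq_zero_of_neg_left ha hf hm]
    by_cases hn : n < 0
    · simp [coeff_eq_zero_of_neg_right hb hf hn]
    obtain ⟨m, rfl⟩ := Int.eq_ofNat_of_zero_le (not_lt.1 hm)
    obtain ⟨n, rfl⟩ := Int.eq_ofNat_of_zero_le (not_lt.1 hn)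
    have hfc := hf m n d
    rw [zpowSpan] at hfc
    generalize f.coeff (↑m, ↑n, d) = e at hfc
    induction hfc using Submodule.span_induction with
    | zero => simp
    | add e e' _ _ h h' => simpa [AddMonoidAlgebra.single_add] using add_mem h h'
    | smul c e _ h => simpa [AddMonoidAlgebra.smul_single] using Submodule.smul_mem _ c h
    | mem e he =>
      obtain ⟨l, ⟨hl, hl'⟩, rfl⟩ := he
      obtain ⟨l, rfl⟩ := Int.eq_ofNat_of_zero_le ((le_max_left _ _).trans hl)
      obtain ⟨k, rfl⟩ := Int.le.dest (hl'.trans (min_le_right _ _))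
      have hk : k ≤ m * a := by zify; omega
      have hl : l ≤ n * b := by zify; omega
      refine Submodule.subset_span ⟨m, n, k, l, hk, hl, ?_⟩
      rw [greedyProd_paramX_mul_greedyProd_paramY σ hk hl, add_comm (k : ℤ)]

lemma IsScrollPoint.exists_linearMap_zpow {S : Type*} [CommRing S] [Algebra F S] {e₁ : F}
    {e₂ : Fˣ} {x : Fin (a + 1) → S} {y : Fin (b + 1) → S} (h : IsScrollPoint e₁ (e₂ : F) x y)
    (ha : 2 ≤ a) (hb : 2 ≤ b) (m n : ℕ) (d : ℤ) :
    ∃ ψ : ReciprocalRootAlgebra e₁ e₂ →ₗ[F] S, ∀ k l : ℕ, k ≤ m * a → l ≤ n * b → (k : ℤ) + l = d →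
      ψ ↑(reciprocalRoot e₁ e₂ ^ (l : ℤ)) = greedyProd x m k * greedyProd y n l := by
  obtain ⟨ψ, hψ⟩ := exists_linearMap_reciprocalRoot_zpow e₁ e₂ (lo := max 0 (d - (m * a : ℕ)))
    (hi := min (n * b : ℕ) d)
    (c := fun l => greedyProd x m (d - l).toNat * greedyProd y n l.toNat) fun l hl hl' => by
      obtain ⟨l, rfl⟩ := Int.eq_ofNat_of_zero_le ((le_max_left _ _).trans hl)
      obtain ⟨k, rfl⟩ := Int.le.dest (hl'.trans (min_le_right _ _))
      have hrec := h.greedyProd_bilinear ha hb (m := m) (n := n) (k := k) (l := l)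
        (by omega) (by omega)
      convert hrec using 6 <;> omega
  refine ⟨ψ, fun k l hk hl hd => ?_⟩
  rw [hψ l (by omega) (by omega)]
  congr 2
  omega

lemma IsScrollPoint.exists_linearMap_param {S : Type*} [CommRing S] [Algebra F S] {e₁ : F}
    {e₂ : Fˣ} {x : Fin (a + 1) → S} {y : Fin (b + 1) → S} (h : IsScrollPoint e₁ (e₂ : F) x y)
    (ha : 2 ≤ a) (hb : 2 ≤ b) :
    ∃ Ψ : LaurentRing (ReciprocalRootAlgebra e₁ e₂) →ₗ[F] S, ∀ m n k l, k ≤ m * a → l ≤ n * b →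
      Ψ (greedyProd (paramX _ : Fin (a + 1) → _) m k *
          greedyProd (paramY (reciprocalRoot e₁ e₂) : Fin (b + 1) → _) n l) =
        greedyProd x m k * greedyProd y n l := by
  choose ψ hψ using fun p : ℤ × ℤ × ℤ =>
    h.exists_linearMap_zpow ha hb p.1.toNat p.2.1.toNat p.2.2
  refine ⟨Finsupp.lsum F ψ ∘ₗ (AddMonoidAlgebra.coeffLinearEquiv F).toLinearMap,
    fun m n k l hk hl => ?_⟩
  rw [greedyProd_paramX_mul_greedyProd_paramY _ hk hl]
  simpa using hψ (m, n, k + l) k l (by simpa using hk) (by simpa using hl) rfl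

lemma IsScrollPoint.injective_of_map_eq_param {S : Type*} [CommRing S] [Algebra F S] {e₁ : F}
    {e₂ : Fˣ} {x : Fin (a + 1) → S} {y : Fin (b + 1) → S} (h : IsScrollPoint e₁ (e₂ : F) x y)
    (ha : 2 ≤ a) (hb : 2 ≤ b) (hgen : Function.Surjective (aeval (R := F) (Sum.elim x y)))
    (φ : S →ₐ[F] LaurentRing (ReciprocalRootAlgebra e₁ e₂)) (hφx : φ ∘ x = paramX _)
    (hφy : φ ∘ y = paramY (reciprocalRoot e₁ e₂)) : Function.Injective φ := by
  obtain ⟨Ψ, hΨ⟩ := h.exists_linearMap_param ha hb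
  suffices Ψ ∘ₗ φ.toLinearMap = LinearMap.id from
    Function.LeftInverse.injective (g := Ψ) (LinearMap.congr_fun this)
  refine LinearMap.ext_on ((range_aeval_eq_span_greedyProd h.minors_left h.minors_right).symm.trans
    ?_) ?_
  · rw [(AlgHom.range_eq_top _).2 hgen, Algebra.top_toSubmodule]
  · rintro _ ⟨m, n, k, l, hk, hl, rfl⟩
    simp [map_greedyProd, hφx, hφy, hΨ m n k l hk hl]

end Parametrization

section Quotient

variable {F a b} (e₁ : F) (e₂ : Fˣ)

/-- The homomorphism `x_i ↦ X * t ^ i`, `y_j ↦ Y * (ρ * t) ^ j` on `P / I_e`. -/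
def parametrization : KPoly F a b ⧸ scrollIdeal F a b e₁ e₂ →ₐ[F]
    LaurentRing (ReciprocalRootAlgebra e₁ e₂) :=
  Ideal.Quotient.liftₐ _ (aeval (Sum.elim (paramX _) (paramY (reciprocalRoot e₁ e₂)))) <|
    isScrollPoint_iff_le_ker.1 (isScrollPoint_param (reciprocalRoot_relation e₁ e₂))

lemma parametrization_mk_xv (i : Fin (a + 1)) :
    parametrization e₁ e₂ (Ideal.Quotient.mk (scrollIdeal F a b e₁ e₂) (xv F a b i)) =
      paramX _ i :=
  aeval_X _ _

lemma parametrization_mk_yv (j : Fin (b + 1)) :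
    parametrization e₁ e₂ (Ideal.Quotient.mk (scrollIdeal F a b e₁ e₂) (yv F a b j)) =
      paramY (reciprocalRoot e₁ e₂) j :=
  aeval_X _ _

lemma parametrization_injective (ha : 2 ≤ a) (hb : 2 ≤ b) :
    Function.Injective (parametrization e₁ e₂ : KPoly F a b ⧸ _ →ₐ[F] _) := by
  refine (isScrollPoint_mk e₁ (e₂ : F)).injective_of_map_eq_param ha hb ?_ _
    (funext (parametrization_mk_xv e₁ e₂)) (funext (parametrization_mk_yv e₁ e₂))
  rw [aeval_sumElim_mk]
  exact Ideal.Quotient.mk_surjective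

lemma mem_range_parametrization_iff (ha : 0 < a) (hb : 0 < b)
    (f : LaurentRing (ReciprocalRootAlgebra e₁ e₂)) :
    f ∈ (parametrization e₁ e₂ : KPoly F a b ⧸ _ →ₐ[F] _).toRingHom.range ↔
      f ∈ windowSubmodule F a b (reciprocalRoot e₁ e₂) (max 0) := by
  rw [← range_aeval_param ha hb]
  constructor
  · rintro ⟨s, rfl⟩
    obtain ⟨p, rfl⟩ := Ideal.Quotient.mk_surjective s
    exact ⟨p, rfl⟩
  · rintro ⟨p, rfl⟩
    exact ⟨Ideal.Quotient.mk _ p, rfl⟩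

lemma span_mk_ne_top [Nontrivial F] (e₁ e₂ : F) (i k : Fin (a + 1)) (j l : Fin (b + 1)) :
    Ideal.span {Ideal.Quotient.mk (scrollIdeal F a b e₁ e₂) (xv F a b i),
      Ideal.Quotient.mk (scrollIdeal F a b e₁ e₂) (xv F a b k - yv F a b j),
      Ideal.Quotient.mk (scrollIdeal F a b e₁ e₂) (yv F a b l)} ≠ ⊤ := by
  let ε : KPoly F a b ⧸ scrollIdeal F a b e₁ e₂ →ₐ[F] F :=
    Ideal.Quotient.liftₐ _ (aeval (Sum.elim 0 0))
      (isScrollPoint_iff_le_ker.1 (isScrollPoint_zero e₁ e₂))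
  refine ne_top_of_le_ne_top (RingHom.ker_ne_top ε) (Ideal.span_le.2 ?_)
  rintro _ (rfl | rfl | rfl) <;> simp [ε, xv, yv]

end Quotient

theorem stmt9_general (F : Type*) [CommRing F] [Nontrivial F] (a b : ℕ) (ha : 2 ≤ a) (hb : 2 ≤ b)
    (e₁ : F) (e₂ : Fˣ) :
    RingTheory.Sequence.IsRegular (KPoly F a b ⧸ scrollIdeal F a b e₁ e₂)
      [Ideal.Quotient.mk (scrollIdeal F a b e₁ e₂) (xv F a b 0),
        Ideal.Quotient.mk (scrollIdeal F a b e₁ e₂) (xv F a b (Fin.last a) - yv F a b 0),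
        Ideal.Quotient.mk (scrollIdeal F a b e₁ e₂) (yv F a b (Fin.last b))] := by
  refine isRegular_of_range_eq_windowSubmodule (φ := (parametrization e₁ e₂).toRingHom)
    (by omega) (by omega) (parametrization_injective e₁ e₂ ha hb)
    (mem_range_parametrization_iff e₁ e₂ (by omega) (by omega)) ?_ ?_ ?_
    (span_mk_ne_top e₁ (e₂ : F) _ _ _ _)
  · simp [cornerMonomial, parametrization_mk_xv, paramX_eq_single]
  · simp [parametrization_mk_xv, parametrization_mk_yv, paramX_eq_single, paramY_eq_single]
  · simp [cornerMonomial, parametrization_mk_yv, paramY_eq_single]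

/-- Let `F` be a field, `a ≥ b ≥ 2`, and `t₁, t₂ ∈ F` nonzero
with `e₁ = t₁ + t₂`, `e₂ = t₁t₂`. Then the images of `x₀, x_a − y₀, y_b` form
a regular sequence on the quotient ring `P/I_e`. -/
theorem stmt9 (F : Type*) [Field F] (a b : ℕ) (hab : b ≤ a) (hb : 2 ≤ b)
    (t1 t2 : F) (ht1 : t1 ≠ 0) (ht2 : t2 ≠ 0) :
    RingTheory.Sequence.IsRegular
      (KPoly F a b ⧸ (I2MX F a b + I2MY F a b + Je F a b (t1 + t2) (t1 * t2)))
      [Ideal.Quotient.mk (I2MX F a b + I2MY F a b + Je F a b (t1 + t2) (t1 * t2))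
          (xv F a b ⟨0, by omega⟩),
        Ideal.Quotient.mk (I2MX F a b + I2MY F a b + Je F a b (t1 + t2) (t1 * t2))
          (xv F a b ⟨a, by omega⟩ - yv F a b ⟨0, by omega⟩),
        Ideal.Quotient.mk (I2MX F a b + I2MY F a b + Je F a b (t1 + t2) (t1 * t2))
          (yv F a b ⟨b, by omega⟩)] := by
  exact stmt9_general F a b (hb.trans hab) hb (t1 + t2)
    (Units.mk0 (t1 * t2) (mul_ne_zero ht1 ht2))

end
end

section
/- Let F be a field, let k ≥ 1, and let t ∈ F satisfy t^k = 1. Let a, b ≥ k and let M_t be the 2×(a+b) matrix over P = F[x₀,…,x_a, y₀,…,y_b] with rows (x₀,…,x_{a−1}, y₀,…,y_{b−1}) and (x₁,…,x_a, t·y₁,…,t·y_b). Then every 2×2 minor of the 2×(a+b+2−2k) matrix m with rows (x₀,…,x_{a−k}, y₀,…,y_{b−k}) and (x_k,…,x_a, y_k,…,y_b) lies in the ideal I₂(M_t) generated by the 2×2 minors of M_t. -/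
open MvPolynomial

noncomputable section

variable (F : Type*) [CommRing F] (a b : ℕ)

/-- The first row `(x₀,…,x_{a−k}, y₀,…,y_{b−k})` of the `2×(a+b+2−2k)`
matrix `m`. -/
def srow1 (k : ℕ) : Fin (a + 1 - k) ⊕ Fin (b + 1 - k) → KPoly F a b
  | Sum.inl c => xv F a b ⟨c, by have := c.isLt; omega⟩
  | Sum.inr c => yv F a b ⟨c, by have := c.isLt; omega⟩

/-- The second row `(x_k,…,x_a, y_k,…,y_b)` of the matrix `m`. -/
def srow2 (k : ℕ) : Fin (a + 1 - k) ⊕ Fin (b + 1 - k) → KPoly F a b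
  | Sum.inl c => xv F a b ⟨c + k, by have := c.isLt; omega⟩
  | Sum.inr c => yv F a b ⟨c + k, by have := c.isLt; omega⟩

/-! Let `u`, `v` each be one of the two sequences of variables, with scalars `σ`, `τ`, where the
`x`-sequence has scalar `1`, the `y`-sequence scalar `t`. Modulo `I₂(M_t)` the minors of `M_t` say
`u_i * (τ * v_{j+1}) = v_j * (σ * u_{i+1})`: a unit shift moves from one factor to the other.
Moving it `k` times raises both scalars to the `k`-th power, where they become `1`. Keeping a scalar
on each side, rather than only their ratio, avoids inverting `t`. -/

theorem mul_pow_mul_shift_comm {M : Type*} [CommMonoid M] {m n : ℕ}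
    {u : Fin (m + 1) → M} {v : Fin (n + 1) → M} {σ τ : M}
    (h : ∀ (i : Fin m) (j : Fin n),
      u i.castSucc * (τ * v j.succ) = v j.castSucc * (σ * u i.succ))
    (k i j : ℕ) (hi : i + k < m + 1) (hj : j + k < n + 1) :
    u ⟨i, by omega⟩ * (τ ^ k * v ⟨j + k, hj⟩) = v ⟨j, by omega⟩ * (σ ^ k * u ⟨i + k, hi⟩) := by
  induction k generalizing i with
  | zero => simpa using mul_comm _ _
  | succ k ih =>
    have shift_once : u ⟨i, by omega⟩ * (τ * v ⟨j + (k + 1), hj⟩) =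
        v ⟨j + k, by omega⟩ * (σ * u ⟨i + 1, by omega⟩) :=
      h ⟨i, by omega⟩ ⟨j + k, by omega⟩
    have shift_rest : u ⟨i + 1, by omega⟩ * (τ ^ k * v ⟨j + k, by omega⟩) =
        v ⟨j, by omega⟩ * (σ ^ k * u ⟨i + (k + 1), hi⟩) := by
      simpa only [add_assoc, add_comm 1 k] using ih (i + 1) (by omega) (by omega)
    calc u ⟨i, by omega⟩ * (τ ^ (k + 1) * v ⟨j + (k + 1), hj⟩)
        = τ ^ k * (u ⟨i, by omega⟩ * (τ * v ⟨j + (k + 1), hj⟩)) := by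
          rw [pow_succ, mul_assoc, mul_left_comm]
      _ = τ ^ k * (v ⟨j + k, by omega⟩ * (σ * u ⟨i + 1, by omega⟩)) := by rw [shift_once]
      _ = σ * (u ⟨i + 1, by omega⟩ * (τ ^ k * v ⟨j + k, by omega⟩)) := by ac_rfl
      _ = σ * (v ⟨j, by omega⟩ * (σ ^ k * u ⟨i + (k + 1), hi⟩)) := by rw [shift_rest]
      _ = v ⟨j, by omega⟩ * (σ ^ (k + 1) * u ⟨i + (k + 1), hi⟩) := by
          rw [pow_succ', mul_assoc, mul_left_comm]

theorem shift_minor_mem_of_pow_eq_one {R : Type*} [CommRing R] {I : Ideal R} {m n k : ℕ}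
    {u : Fin (m + 1) → R} {v : Fin (n + 1) → R} {σ τ : R} (hσ : σ ^ k = 1) (hτ : τ ^ k = 1)
    (h : ∀ (i : Fin m) (j : Fin n),
      u i.castSucc * (τ * v j.succ) - v j.castSucc * (σ * u i.succ) ∈ I)
    (i : Fin (m + 1 - k)) (j : Fin (n + 1 - k)) :
    u ⟨i, by omega⟩ * v ⟨j + k, by omega⟩ - v ⟨j, by omega⟩ * u ⟨i + k, by omega⟩ ∈ I := by
  let π := Ideal.Quotient.mk I
  have shift_once (i : Fin m) (j : Fin n) :
      π (u i.castSucc) * (π τ * π (v j.succ)) = π (v j.castSucc) * (π σ * π (u i.succ)) := by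
    simpa only [π, map_mul] using Ideal.Quotient.eq.mpr (h i j)
  have shift_k := mul_pow_mul_shift_comm (u := π ∘ u) (v := π ∘ v) shift_once k i j
    (by omega) (by omega)
  rw [← Ideal.Quotient.eq]
  simpa only [π, Function.comp_apply, ← map_pow, hσ, hτ, map_one, one_mul, ← map_mul]
    using shift_k

theorem minor_mem_I2M {R : Type*} [CommRing R] {a b : ℕ} (t : R) (d d' : Fin a ⊕ Fin b) :
    mrow1 R a b d * mrow2 R a b t d' - mrow1 R a b d' * mrow2 R a b t d ∈ I2M R a b t :=
  Ideal.subset_span ⟨d, d', rfl⟩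

theorem stmt11_general {R : Type*} [CommRing R] {a b k : ℕ} {t : R} (ht : t ^ k = 1)
    (c c' : Fin (a + 1 - k) ⊕ Fin (b + 1 - k)) :
    srow1 R a b k c * srow2 R a b k c' - srow1 R a b k c' * srow2 R a b k c ∈ I2M R a b t := by
  have hC : (C t : KPoly R a b) ^ k = 1 := by rw [← C_pow, ht, C_1]
  rcases c with i | i <;> rcases c' with j | j
  · exact shift_minor_mem_of_pow_eq_one (one_pow k) (one_pow k) (fun i j => by
      simpa only [mrow1, mrow2, one_mul] using minor_mem_I2M t (.inl i) (.inl j)) i j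
  · exact shift_minor_mem_of_pow_eq_one (one_pow k) hC (fun i j => by
      simpa only [mrow1, mrow2, one_mul] using minor_mem_I2M t (.inl i) (.inr j)) i j
  · exact shift_minor_mem_of_pow_eq_one hC (one_pow k) (fun i j => by
      simpa only [mrow1, mrow2, one_mul] using minor_mem_I2M t (.inr i) (.inl j)) i j
  · exact shift_minor_mem_of_pow_eq_one hC hC
      (fun i j => minor_mem_I2M t (.inr i) (.inr j)) i j

/-- Let `F` be a field, `k ≥ 1`, `t ∈ F` with `t^k = 1`, and
`a, b ≥ k`. Then every 2×2 minor of the matrix `m` with rows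
`(x₀,…,x_{a−k}, y₀,…,y_{b−k})` and `(x_k,…,x_a, y_k,…,y_b)` lies in the
ideal `I₂(M_t)`. -/
theorem stmt11 (F : Type*) [Field F] (a b k : ℕ) (hk : 1 ≤ k) (t : F)
    (ht : t ^ k = 1) (hka : k ≤ a) (hkb : k ≤ b)
    (c c' : Fin (a + 1 - k) ⊕ Fin (b + 1 - k)) :
    srow1 F a b k c * srow2 F a b k c' - srow1 F a b k c' * srow2 F a b k c
      ∈ I2M F a b t := by
  exact stmt11_general ht c c'

end
end

section
/- Let F be a field and a, b ≥ 2 integers. Let I = I₂(MX) + I₂(MY) + J_{(0,1)} ⊆ F[x₀,…,x_a, y₀,…,y_b], where J_{(0,1)} is generated by x_{i+2}y_j + x_i y_{j+2} for 0 ≤ i ≤ a−2, 0 ≤ j ≤ b−2. Then every 2×2 minor of the 2×(a+b−2) matrix m with rows (x₀, x₁, …, x_{a−2}, y₀, y₁, …, y_{b−2}) and (x₂, x₃, …, x_a, −y₂, −y₃, …, −y_b) lies in I. -/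
open MvPolynomial

noncomputable section

variable (F : Type*) [CommRing F] (a b : ℕ)

/-- The ideal `J_{(0,1)}` generated by `x_{i+2}y_j + x_iy_{j+2}` for
`0 ≤ i ≤ a−2`, `0 ≤ j ≤ b−2`. -/
def J01 : Ideal (KPoly F a b) :=
  Ideal.span { f | ∃ i j : ℕ, ∃ _ : i + 2 ≤ a, ∃ _ : j + 2 ≤ b,
    f = xv F a b ⟨i + 2, by omega⟩ * yv F a b ⟨j, by omega⟩
      + xv F a b ⟨i, by omega⟩ * yv F a b ⟨j + 2, by omega⟩ }

/-- The first row `(x₀, x₁, …, x_{a−2}, y₀, y₁, …, y_{b−2})` of the matrix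
`m` from Theorem 4.6. -/
def trow1 : Fin (a - 1) ⊕ Fin (b - 1) → KPoly F a b
  | Sum.inl c => xv F a b ⟨c, by have := c.isLt; omega⟩
  | Sum.inr c => yv F a b ⟨c, by have := c.isLt; omega⟩

/-- The second row `(x₂, x₃, …, x_a, −y₂, −y₃, …, −y_b)` of the matrix `m`. -/
def trow2 : Fin (a - 1) ⊕ Fin (b - 1) → KPoly F a b
  | Sum.inl c => xv F a b ⟨c + 2, by have := c.isLt; omega⟩
  | Sum.inr c => - yv F a b ⟨c + 2, by have := c.isLt; omega⟩

/-- The ideal of the 2×2 minors of the Hankel matrix with rows `(z₀,…,z_{m−1})` and `(z₁,…,z_m)`,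
the common form of `I2MX` and `I2MY`. As there, a minor is indexed by an arbitrary pair of
columns, not necessarily increasing. -/
def hankelIdeal {R : Type*} [CommRing R] {m : ℕ} (z : Fin (m + 1) → R) : Ideal R :=
  Ideal.span { f | ∃ c c' : Fin m, f = z c.castSucc * z c'.succ - z c'.castSucc * z c.succ }

theorem I2MX_eq_hankelIdeal : I2MX F a b = hankelIdeal (xv F a b) := rfl

theorem I2MY_eq_hankelIdeal : I2MY F a b = hankelIdeal (yv F a b) := rfl

/- Modulo the ideal, `z_i z_{j+n} ≡ z_{i+1} z_{j+n-1} ≡ ⋯ ≡ z_{i+n} z_j`, where each congruence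
is a single minor of the Hankel matrix. -/
theorem shift_minor_mem_hankelIdeal {R : Type*} [CommRing R] {m : ℕ} (z : Fin (m + 1) → R)
    {i j n : ℕ} (hi : i + n ≤ m) (hj : j + n ≤ m) :
    z ⟨i, by omega⟩ * z ⟨j + n, by omega⟩ - z ⟨j, by omega⟩ * z ⟨i + n, by omega⟩
      ∈ hankelIdeal z := by
  induction n generalizing i with
  | zero =>
    convert zero_mem (hankelIdeal z) using 1
    exact sub_eq_zero.mpr (mul_comm _ _)
  | succ n ih =>
    have adjacent : z ⟨i, by omega⟩ * z ⟨j + n + 1, by omega⟩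
        - z ⟨j + n, by omega⟩ * z ⟨i + 1, by omega⟩ ∈ hankelIdeal z :=
      Ideal.subset_span ⟨⟨i, by omega⟩, ⟨j + n, by omega⟩, rfl⟩
    have remaining : z ⟨i + 1, by omega⟩ * z ⟨j + n, by omega⟩
        - z ⟨j, by omega⟩ * z ⟨i + 1 + n, by omega⟩ ∈ hankelIdeal z :=
      ih (by omega) (by omega)
    convert add_mem adjacent remaining using 1
    simp only [Nat.add_right_comm i 1 n, ← Nat.add_assoc]
    ring

theorem trow_minor_inl_inl_mem_I2MX (i j : Fin (a - 1)) :
    trow1 F a b (.inl i) * trow2 F a b (.inl j) - trow1 F a b (.inl j) * trow2 F a b (.inl i)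
      ∈ I2MX F a b := by
  rw [I2MX_eq_hankelIdeal]
  exact shift_minor_mem_hankelIdeal (xv F a b) (by omega) (by omega)

theorem trow_minor_inr_inr_mem_I2MY (i j : Fin (b - 1)) :
    trow1 F a b (.inr i) * trow2 F a b (.inr j) - trow1 F a b (.inr j) * trow2 F a b (.inr i)
      ∈ I2MY F a b := by
  have shift_minor : yv F a b ⟨j, by omega⟩ * yv F a b ⟨i + 2, by omega⟩
      - yv F a b ⟨i, by omega⟩ * yv F a b ⟨j + 2, by omega⟩ ∈ I2MY F a b := by
    rw [I2MY_eq_hankelIdeal]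
    exact shift_minor_mem_hankelIdeal (yv F a b) (by omega) (by omega)
  convert shift_minor using 1
  simp only [trow1, trow2]
  ring

theorem trow_minor_inr_inl_mem_J01 (j : Fin (b - 1)) (i : Fin (a - 1)) :
    trow1 F a b (.inr j) * trow2 F a b (.inl i) - trow1 F a b (.inl i) * trow2 F a b (.inr j)
      ∈ J01 F a b := by
  refine Ideal.subset_span ⟨i, j, by omega, by omega, ?_⟩
  simp only [trow1, trow2]
  ring

theorem stmt12_general (F : Type*) [CommRing F] (a b : ℕ) (c c' : Fin (a - 1) ⊕ Fin (b - 1)) :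
    trow1 F a b c * trow2 F a b c' - trow1 F a b c' * trow2 F a b c
      ∈ I2MX F a b + I2MY F a b + J01 F a b := by
  rcases c with i | j <;> rcases c' with i' | j'
  · exact Ideal.mem_sup_left (Ideal.mem_sup_left (trow_minor_inl_inl_mem_I2MX F a b i i'))
  · rw [← neg_sub]
    exact Ideal.mem_sup_right (neg_mem (trow_minor_inr_inl_mem_J01 F a b j' i))
  · exact Ideal.mem_sup_right (trow_minor_inr_inl_mem_J01 F a b j i')
  · exact Ideal.mem_sup_left (Ideal.mem_sup_right (trow_minor_inr_inr_mem_I2MY F a b j j'))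

/-- Let `F` be a field and `a, b ≥ 2`. Every 2×2 minor of
the `2×(a+b−2)` matrix `m` with rows `(x₀,…,x_{a−2}, y₀,…,y_{b−2})` and
`(x₂,…,x_a, −y₂,…,−y_b)` lies in `I = I₂(MX) + I₂(MY) + J_{(0,1)}`. -/
theorem stmt12 (F : Type*) [Field F] (a b : ℕ) (ha : 2 ≤ a) (hb : 2 ≤ b)
    (c c' : Fin (a - 1) ⊕ Fin (b - 1)) :
    trow1 F a b c * trow2 F a b c' - trow1 F a b c' * trow2 F a b c
      ∈ I2MX F a b + I2MY F a b + J01 F a b :=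
  stmt12_general F a b c c'

end
end

section
/- Let a, b ≥ 2 and 1 ≤ p ≤ a+b−2 be integers. Then, as integers, p·C(a, p+1) + Σ_{j=0}^{b−2} [(a−2)·C(a+j−1, p−1) + C(a+j−2, p−1)] + Σ_{j=1}^{b−2} j·C(a+j−2, p−1) + (b−2)·C(a+b−3, p−1) + C(b−2, p−1) = C(a−2, p−1) + C(b−2, p−1) + p·C(a+b−1, p+1) − 2·C(a+b−3, p−1), where C(n, k) denotes the binomial coefficient (which is 0 when k > n or k < 0). -/
/-!
Put `f j = C(a + j - 2, p - 1)`. By Pascal's rule and the absorption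
`p * C(k, p) = k * C(k - 1, p - 1)`, the difference
`p * C(a + b - 1, p + 1) - p * C(a, p + 1)` is `∑ j < b - 1, (a + j) * f (j + 1)`.
Splitting `a + j = (a - 2) + (j + 2)`, this sum and those of the Betti number formula differ by
`∑ j < b - 1, ((j + 2) * f (j + 1) - (j + 1) * f j)`, which telescopes for every sequence `f`.
-/

open Finset

theorem choose_succ_add_sum_range_choose (m k n : ℕ) :
    m.choose (k + 1) + ∑ j ∈ range n, (m + j).choose k = (m + n).choose (k + 1) := by
  induction n with
  | zero => simp
  | succ n ih => rw [sum_range_succ, ← add_assoc, ih, ← add_assoc, Nat.choose_succ_succ', add_comm]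

theorem sum_range_add_one_mul_choose (m k n : ℕ) :
    (k + 1) * (m + 1).choose (k + 2) + ∑ j ∈ range n, (m + j + 1) * (m + j).choose k =
      (k + 1) * (m + 1 + n).choose (k + 2) := by
  have absorb (j : ℕ) :
      (m + j + 1) * (m + j).choose k = (k + 1) * (m + 1 + j).choose (k + 1) := by
    rw [Nat.add_one_mul_choose_eq, mul_comm, add_right_comm]
  simp only [absorb]
  rw [← mul_sum, ← mul_add, choose_succ_add_sum_range_choose]

theorem sum_Icc_one_natCast_mul_eq_sum_range {R : Type*} [NonAssocSemiring R] (f : ℕ → R) (n : ℕ) :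
    ∑ j ∈ Icc 1 n, (j : R) * f j = ∑ j ∈ range (n + 1), (j : R) * f j := by
  rw [sum_range_eq_add_Ico _ n.add_one_pos, Nat.cast_zero, zero_mul, zero_add,
    Ico_add_one_right_eq_Icc]

theorem sum_range_add_two_mul_succ {R : Type*} [NonAssocSemiring R] (f : ℕ → R) (n : ℕ) :
    f 0 + ∑ j ∈ range n, ((j : R) + 2) * f (j + 1) =
      ∑ j ∈ range n, ((j : R) + 1) * f j + ((n : R) + 1) * f n := by
  rw [← sum_range_succ (fun j ↦ ((j : R) + 1) * f j), sum_range_succ', add_comm]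
  simp [add_assoc, one_add_one_eq_two]

theorem sum_range_mul_succ_add_sum_Icc_mul {R : Type*} [NonAssocRing R]
    (f : ℕ → R) (c : R) (n : ℕ) :
    ∑ j ∈ range (n + 1), (c * f (j + 1) + f j) + ∑ j ∈ Icc 1 n, (j : R) * f j + n * f (n + 1) =
      f 0 + ∑ j ∈ range (n + 1), (c + j + 2) * f (j + 1) - 2 * f (n + 1) := by
  have telescope := sum_range_add_two_mul_succ f (n + 1)
  rw [sum_Icc_one_natCast_mul_eq_sum_range, eq_sub_iff_add_eq]
  simp only [add_assoc c, add_mul c, sum_add_distrib]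
  rw [add_left_comm, telescope]
  simp only [add_mul, sum_add_distrib, Nat.cast_add, Nat.cast_one, one_mul, two_mul]
  abel

/-- For integers `a, b ≥ 2` and `1 ≤ p ≤ a+b−2`, the Betti
number formula
`p·C(a,p+1) + Σ_{j=0}^{b−2}((a−2)·C(a+j−1,p−1) + C(a+j−2,p−1))
  + Σ_{j=1}^{b−2} j·C(a+j−2,p−1) + (b−2)·C(a+b−3,p−1) + C(b−2,p−1)`
equals its simplification
`C(a−2,p−1) + C(b−2,p−1) + p·C(a+b−1,p+1) − 2·C(a+b−3,p−1)` in `ℤ`. -/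
theorem stmt14 (a b p : ℕ) (ha : 2 ≤ a) (hb : 2 ≤ b)
    (hp : 1 ≤ p) (hp' : p ≤ a + b - 2) :
    (p : ℤ) * (a.choose (p + 1) : ℤ)
      + ∑ j ∈ Finset.range (b - 1),
          (((a : ℤ) - 2) * ((a + j - 1).choose (p - 1) : ℤ)
            + ((a + j - 2).choose (p - 1) : ℤ))
      + ∑ j ∈ Finset.Icc 1 (b - 2), (j : ℤ) * ((a + j - 2).choose (p - 1) : ℤ)
      + ((b : ℤ) - 2) * ((a + b - 3).choose (p - 1) : ℤ)
      + ((b - 2).choose (p - 1) : ℤ)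
    = ((a - 2).choose (p - 1) : ℤ) + ((b - 2).choose (p - 1) : ℤ)
      + (p : ℤ) * ((a + b - 1).choose (p + 1) : ℤ)
      - 2 * ((a + b - 3).choose (p - 1) : ℤ) := by
  obtain ⟨m, rfl⟩ := Nat.exists_eq_add_of_le' ha
  obtain ⟨n, rfl⟩ := Nat.exists_eq_add_of_le' hb
  obtain ⟨q, rfl⟩ := Nat.exists_eq_add_of_le' hp
  have sub_one (j : ℕ) : m + 2 + j - 1 = m + (j + 1) := by omega
  have sub_two (j : ℕ) : m + 2 + j - 2 = m + j := by omega
  have sub_three : m + 2 + (n + 2) - 3 = m + (n + 1) := by omega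
  have telescope := sum_range_mul_succ_add_sum_Icc_mul (fun j ↦ ((m + j).choose q : ℤ)) m n
  have hockey_stick :
      (q + 1) * (m + 2).choose (q + 2)
        + ∑ j ∈ range (n + 1), (m + j + 2) * (m + (j + 1)).choose q
      = (q + 1) * (m + (n + 3)).choose (q + 2) := by
    simpa only [add_assoc, add_comm, add_left_comm, Nat.reduceAdd]
      using sum_range_add_one_mul_choose (m + 1) q (n + 1)
  zify at hockey_stick
  simp only [sub_one, sub_two, sub_three, Nat.add_sub_cancel, Nat.cast_add, Nat.cast_ofNat,
    Nat.cast_one, add_sub_cancel_right, add_zero, Nat.add_succ_sub_one] at telescope ⊢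
  linear_combination telescope + hockey_stick
end
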